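/- arXiv:2408.03233 — 2 statements merged into one kernel-verified Lean document; each statement's English description precedes it below -/
import Mathlib

section
/- Let u be a bounded harmonic function on {x ∈ ℝ² : |x| > ρ}. Then there exist constants c₀ and c_{j,c}, c_{j,s} (j ≥ 1) such that u(r cos θ, r sin θ) = c₀ + Σ_{j=1}^∞ (c_{j,c} cos(jθ) + c_{j,s} sin(jθ)) r^{−j} for all r > ρ, with the series converging absolutely and uniformly on compact subsets of {r > ρ}. -/
open Complex Real

/-- `u` is (twice continuously differentiable and) harmonic on the set `S ⊆ ℝ²`. -/
def IsHarmonicOn (u : ℝ × ℝ → ℂ) (S : Set (ℝ × ℝ)) : Prop :=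
  ContDiffOn ℝ 2 u S ∧ ∀ x ∈ S,
    fderiv ℝ (fun y => fderiv ℝ u y (1, 0)) x (1, 0) +
      fderiv ℝ (fun y => fderiv ℝ u y (0, 1)) x (0, 1) = 0

open InnerProductSpace Metric Filter Topology

/-- The gradient of a real harmonic function, written as the holomorphic function `∂₁f - i ∂₂f`. -/
noncomputable def complexGradient (f : ℂ → ℝ) (z : ℂ) : ℂ :=
  fderiv ℝ f z 1 - I * fderiv ℝ f z I

lemma fderiv_apply_eq_re_complexGradient_mul (f : ℂ → ℝ) (z ζ : ℂ) :
    fderiv ℝ f z ζ = (complexGradient f z * ζ).re := by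
  have h : ζ = ζ.re • (1 : ℂ) + ζ.im • I := by simp
  conv_lhs => rw [h, map_add, map_smul, map_smul]
  simp [complexGradient]
  ring

lemma complexGradient_congr {f g : ℂ → ℝ} {z : ℂ} (h : f =ᶠ[𝓝 z] g) :
    complexGradient f z = complexGradient g z := by
  rw [complexGradient, complexGradient, h.fderiv_eq]

lemma complexGradient_re {F : ℂ → ℂ} {z : ℂ} (hF : DifferentiableAt ℂ F z) :
    complexGradient (fun w => (F w).re) z = deriv F z := by
  have h : HasFDerivAt (fun w => (F w).re)
      (reCLM.comp ((ContinuousLinearMap.toSpanSingleton ℂ (deriv F z)).restrictScalars ℝ)) z :=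
    reCLM.hasFDerivAt.comp z (hF.hasDerivAt.hasFDerivAt.restrictScalars ℝ)
  apply Complex.ext <;> simp [complexGradient, h.fderiv]

/-- A gradient estimate for bounded harmonic functions. -/
lemma norm_complexGradient_le {f : ℂ → ℝ} {z : ℂ} {R B : ℝ} (hR : 0 < R)
    (hf : HarmonicOnNhd f (ball z R)) (hB : ∀ w ∈ ball z R, |f w| ≤ B) :
    ‖complexGradient f z‖ ≤ Real.exp (2 * B) / (R / 2) := by
  obtain ⟨F, hF, hFf⟩ := hf.exists_analyticOnNhd_ball_re_eq
  have hz : z ∈ ball z R := mem_ball_self hR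
  have hFd : DifferentiableOn ℂ F (ball z R) := hF.differentiableOn
  have hsub : closedBall z (R / 2) ⊆ ball z R := closedBall_subset_ball (by linarith)
  have hcauchy : ‖deriv (fun w => Complex.exp (F w)) z‖ ≤ Real.exp B / (R / 2) := by
    refine norm_deriv_le_of_forall_mem_sphere_norm_le (by positivity)
      (hFd.cexp.diffContOnCl_ball hsub) fun w hw => ?_
    have hw' := hsub (sphere_subset_closedBall hw)
    rw [norm_exp, Real.exp_le_exp, show (F w).re = f w from hFf hw']
    exact (abs_le.1 (hB w hw')).2
  have hFz : DifferentiableAt ℂ F z := (hF z hz).differentiableAt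
  rw [hFz.hasDerivAt.cexp.deriv, norm_mul, norm_exp, show (F z).re = f z from hFf hz] at hcauchy
  have hgrad : complexGradient f z = deriv F z := by
    rw [← complexGradient_re hFz]
    exact complexGradient_congr (Filter.eventually_of_mem (ball_mem_nhds z hR) hFf.symm)
  rw [hgrad]
  have h1 : Real.exp (-B) ≤ Real.exp (f z) := Real.exp_le_exp.2 (abs_le.1 (hB z hz)).1
  calc ‖deriv F z‖ = Real.exp B * (Real.exp (-B) * ‖deriv F z‖) := by
        rw [← mul_assoc, ← Real.exp_add]; simp
    _ ≤ Real.exp B * (Real.exp B / (R / 2)) := by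
        gcongr
        exact (mul_le_mul_of_nonneg_right h1 (norm_nonneg _)).trans hcauchy
    _ = Real.exp (2 * B) / (R / 2) := by
        rw [two_mul, Real.exp_add]; ring

lemma lt_norm_inv_of_mem_ball {ρ : ℝ} (hρ : 0 < ρ) {w : ℂ} (hw : w ∈ ball (0 : ℂ) ρ⁻¹)
    (h0 : w ≠ 0) : ρ < ‖w⁻¹‖ := by
  rw [norm_inv, lt_inv_comm₀ hρ (norm_pos_iff.2 h0)]
  simpa using hw

lemma inv_mem_ball_of_lt_norm {ρ : ℝ} (hρ : 0 < ρ) {z : ℂ} (hz : ρ < ‖z‖) :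
    z⁻¹ ∈ ball (0 : ℂ) ρ⁻¹ := by
  simpa using inv_strictAnti₀ hρ hz

/-- A holomorphic function of size `O(1 / |z|)` at infinity is `H (1 / z) / z` with `H`
holomorphic at the origin. -/
lemma exists_differentiableOn_eq_inv_mul {ρ C : ℝ} (hρ : 0 < ρ) {g : ℂ → ℂ}
    (hg : ∀ z, ρ < ‖z‖ → DifferentiableAt ℂ g z)
    (hC : ∀ z, ρ < ‖z‖ → ‖g z‖ ≤ C / (‖z‖ - ρ)) :
    ∃ H : ℂ → ℂ, DifferentiableOn ℂ H (ball 0 ρ⁻¹) ∧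
      ∀ z, ρ < ‖z‖ → g z = H z⁻¹ * z⁻¹ := by
  have hball : ball (0 : ℂ) ρ⁻¹ ∈ 𝓝 0 := ball_mem_nhds 0 (by positivity)
  set h : ℂ → ℂ := fun w => g w⁻¹ * w⁻¹ with hh
  have hd : DifferentiableOn ℂ h (ball 0 ρ⁻¹ \ {0}) := by
    rintro w ⟨hw, h0⟩
    have h0 : w ≠ 0 := h0
    have hi : DifferentiableAt ℂ (fun w : ℂ => w⁻¹) w := differentiableAt_inv h0
    exact (((hg _ (lt_norm_inv_of_mem_ball hρ hw h0)).comp w hi).mul hi).differentiableWithinAt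
  have hC0 : 0 ≤ C := by
    have h2 : ρ < ‖((2 * ρ : ℝ) : ℂ)‖ := by
      rw [norm_real, Real.norm_of_nonneg (by positivity)]; linarith
    have := (norm_nonneg _).trans (hC _ h2)
    by_contra! hneg
    exact absurd this (not_le.2 (div_neg_of_neg_of_pos hneg (by linarith)))
  have hb : IsBoundedUnder (· ≤ ·) (𝓝[≠] (0 : ℂ)) fun w => ‖h w - h 0‖ := by
    refine ⟨2 * C, eventually_map.2 ?_⟩
    have hs : ball (0 : ℂ) (2 * ρ)⁻¹ ∈ 𝓝 0 := ball_mem_nhds 0 (by positivity)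
    filter_upwards [mem_nhdsWithin_of_mem_nhds hs, self_mem_nhdsWithin] with w hw h0
    have h0 : w ≠ 0 := h0
    have hw2 : 2 * ρ < ‖w⁻¹‖ := lt_norm_inv_of_mem_ball (by positivity) hw h0
    have hgw := hC w⁻¹ (by linarith)
    have : h 0 = 0 := by simp [hh]
    rw [this, sub_zero, hh, norm_mul]
    calc ‖g w⁻¹‖ * ‖w⁻¹‖ ≤ C / (‖w⁻¹‖ - ρ) * ‖w⁻¹‖ := by gcongr
      _ ≤ 2 * C := by
        rw [div_mul_eq_mul_div, div_le_iff₀ (by linarith)]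
        nlinarith
  refine ⟨_, Complex.differentiableOn_update_limUnder_of_isLittleO hball hd
    hb.isLittleO_sub_self_inv, fun z hz => ?_⟩
  have hz0 : z ≠ 0 := norm_pos_iff.1 (hρ.trans hz)
  rw [Function.update_of_ne (inv_ne_zero hz0)]
  simp [hh, hz0]

/-- A function with gradient `a / z` near infinity is constant there if it is bounded along the
positive real axis. -/
lemma eq_const_of_hasFDerivAt_div {ρ M : ℝ} (hρ : 0 < ρ) {V : ℂ → ℝ} {a : ℂ}
    (hV : ∀ z, ρ < ‖z‖ → HasFDerivAt V
      (reCLM.comp ((ContinuousLinearMap.toSpanSingleton ℂ (a * z⁻¹)).restrictScalars ℝ)) z)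
    (hM : ∀ᶠ t : ℝ in atTop, |V (Complex.exp t)| ≤ M) :
    ∃ k : ℝ, ∀ z, ρ < ‖z‖ → V z = k := by
  set S : Set ℂ := {s | Real.log ρ < s.re} with hS
  have hSo : IsOpen S := isOpen_lt continuous_const continuous_re
  have hSc : Convex ℝ S := convex_halfSpace_re_gt _
  have hexp : ∀ s ∈ S, ρ < ‖Complex.exp s‖ := fun s hs => by
    rw [norm_exp, ← Real.log_lt_iff_lt_exp hρ]; exact hs
  have hderiv : ∀ s ∈ S, HasFDerivAt (fun s => V (Complex.exp s) - (a * s).re)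
      (0 : ℂ →L[ℝ] ℝ) s := by
    intro s hs
    have h1 := (hV _ (hexp s hs)).comp s ((Complex.hasDerivAt_exp s).hasFDerivAt.restrictScalars ℝ)
    have h2 : HasFDerivAt (fun s : ℂ => (a * s).re) (reCLM.comp
        ((ContinuousLinearMap.toSpanSingleton ℂ a).restrictScalars ℝ)) s := by
      have := ((hasDerivAt_id s).const_mul a).hasFDerivAt.restrictScalars ℝ
      simpa [-mul_re, Function.comp_def] using reCLM.hasFDerivAt.comp s this
    refine (h1.sub h2).congr_fderiv ?_
    ext ζ
    have : ζ * Complex.exp s * (a * (Complex.exp s)⁻¹) = ζ * a := by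
      field_simp [Complex.exp_ne_zero]
    simp [this, -mul_re]
  set s₀ : ℂ := ((Real.log ρ + 1 : ℝ) : ℂ) with hs₀
  have hs₀S : s₀ ∈ S := by simp [hS, hs₀]
  have hconst : ∀ s ∈ S, V (Complex.exp s) - (a * s).re = V (Complex.exp s₀) - (a * s₀).re := by
    intro s hs
    refine hSc.is_const_of_fderivWithin_eq_zero (𝕜 := ℝ)
      (f := fun s => V (Complex.exp s) - (a * s).re)
      (fun s hs => (hderiv s hs).differentiableAt.differentiableWithinAt)
      (fun s hs => ?_) hs hs₀S
    rw [fderivWithin_of_isOpen hSo hs, (hderiv s hs).fderiv]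
  set k := V (Complex.exp s₀) - (a * s₀).re with hk
  have him : a.im = 0 := by
    have h1 := hconst (s₀ + 2 * π * I) (by simp [hS, hs₀])
    rw [Complex.exp_periodic s₀, hk, sub_right_inj, mul_add, add_re, add_eq_left] at h1
    have : (a * (2 * π * I)).re = -(a.im * (2 * π)) := by simp
    rw [this, neg_eq_zero] at h1
    exact (mul_eq_zero.1 h1).resolve_right (by positivity)
  have hre : a.re = 0 := by
    by_contra hne
    have htop : Tendsto (fun t : ℝ => |a.re| * t) atTop atTop :=
      tendsto_id.const_mul_atTop (abs_pos.2 hne)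
    obtain ⟨t, ht1, ht2, ht3, ht0⟩ := (hM.and ((htop.eventually_gt_atTop (M + |k|)).and
      ((eventually_gt_atTop (Real.log ρ)).and (eventually_ge_atTop 0)))).exists
    have h1 := hconst t (by simpa [hS] using ht3)
    have h2 : (a * (t : ℂ)).re = a.re * t := by simp
    have h3 : a.re * t = V (Complex.exp t) - k := by linarith
    have h4 : |a.re * t| ≤ M + |k| := by
      rw [h3]; exact (abs_sub _ _).trans (by gcongr)
    rw [abs_mul, abs_of_nonneg ht0] at h4
    linarith
  have ha : a = 0 := Complex.ext hre him
  refine ⟨k, fun z hz => ?_⟩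
  have hz0 : z ≠ 0 := norm_pos_iff.1 (hρ.trans hz)
  have := hconst (Complex.log z) (by
    simpa [hS, Complex.log_re] using Real.log_lt_log hρ hz)
  simpa [ha, Complex.exp_log hz0] using this

/-- A bounded real harmonic function near infinity is, up to a constant, the real part of a
holomorphic function of `1 / z`. -/
lemma exists_eq_add_re_comp_inv {ρ B : ℝ} (hρ : 0 < ρ) {v : ℂ → ℝ}
    (hv : ∀ z, ρ < ‖z‖ → HarmonicAt v z) (hB : ∀ z, ρ < ‖z‖ → |v z| ≤ B) :
    ∃ (k : ℝ) (Φ : ℂ → ℂ), DifferentiableOn ℂ Φ (ball 0 ρ⁻¹) ∧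
      ∀ z, ρ < ‖z‖ → v z = k + (Φ z⁻¹).re := by
  have hgrad : ∀ z, ρ < ‖z‖ → ‖complexGradient v z‖ ≤ 2 * Real.exp (2 * B) / (‖z‖ - ρ) := by
    intro z hz
    have hsub : ∀ w ∈ ball z (‖z‖ - ρ), ρ < ‖w‖ := fun w hw => by
      have h1 : ‖w - z‖ < ‖z‖ - ρ := by simpa [dist_eq_norm] using hw
      have h2 := norm_sub_norm_le z w
      rw [norm_sub_rev] at h2
      linarith
    refine (norm_complexGradient_le (sub_pos.2 hz) (fun w hw => hv w (hsub w hw))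
      fun w hw => hB w (hsub w hw)).trans_eq ?_
    field_simp
  obtain ⟨H, hH, hgH⟩ := exists_differentiableOn_eq_inv_mul hρ
    (fun z hz => HarmonicAt.differentiableAt_complex_partial (hv z hz)) hgrad
  have hball : ball (0 : ℂ) ρ⁻¹ ∈ 𝓝 0 := ball_mem_nhds 0 (by positivity)
  obtain ⟨Φ, hΦ⟩ := ((Complex.differentiableOn_dslope hball).2 hH).neg.isExactOn_ball
  have hV : ∀ z, ρ < ‖z‖ → HasFDerivAt (fun z => v z - (Φ z⁻¹).re)
      (reCLM.comp ((ContinuousLinearMap.toSpanSingleton ℂ (H 0 * z⁻¹)).restrictScalars ℝ)) z := by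
    intro z hz
    have hz0 : z ≠ 0 := norm_pos_iff.1 (hρ.trans hz)
    have h1 := ((hv z hz).1.differentiableAt two_ne_zero).hasFDerivAt
    have h2 := (hΦ _ (inv_mem_ball_of_lt_norm hρ hz)).comp z (hasDerivAt_inv hz0)
    have h3 := reCLM.hasFDerivAt.comp z (h2.hasFDerivAt.restrictScalars ℝ)
    refine (h1.sub h3).congr_fderiv ?_
    have hg : complexGradient v z = H z⁻¹ * z⁻¹ := hgH z hz
    ext ζ
    have h4 : complexGradient v z * ζ - ζ * (-dslope H 0 z⁻¹ * -(z ^ 2)⁻¹) = ζ * (H 0 * z⁻¹) := by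
      rw [hg, dslope_of_ne _ (inv_ne_zero hz0), slope_def_field]
      field_simp
      ring
    simpa [fderiv_apply_eq_re_complexGradient_mul, -mul_re] using congrArg re h4
  have hlim : Tendsto (fun t : ℝ => Φ (Complex.exp t)⁻¹) atTop (𝓝 (Φ 0)) := by
    refine (hΦ 0 (mem_of_mem_nhds hball)).continuousAt.tendsto.comp ?_
    rw [tendsto_zero_iff_norm_tendsto_zero]
    simpa [norm_exp, ← Real.exp_neg] using Real.tendsto_exp_neg_atTop_nhds_zero
  have hbd : ∀ᶠ t : ℝ in atTop,
      |v (Complex.exp t) - (Φ (Complex.exp t)⁻¹).re| ≤ B + (‖Φ 0‖ + 1) := by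
    filter_upwards [hlim.norm.eventually (ge_mem_nhds (lt_add_one ‖Φ 0‖)),
      eventually_gt_atTop (Real.log ρ)] with t ht1 ht2
    have ht3 : ρ < ‖Complex.exp t‖ := by
      rw [norm_exp, ← Real.log_lt_iff_lt_exp hρ]; simpa using ht2
    exact (abs_sub _ _).trans (add_le_add (hB _ ht3) ((abs_re_le_norm _).trans ht1))
  obtain ⟨k, hk⟩ := eq_const_of_hasFDerivAt_div hρ hV hbd
  exact ⟨k, Φ, fun w hw => (hΦ w hw).differentiableAt.differentiableWithinAt,
    fun z hz => by rw [← hk z hz]; ring⟩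

lemma exists_hasSum_re_inv_pow {ρ B : ℝ} (hρ : 0 < ρ) {v : ℂ → ℝ}
    (hv : ∀ z, ρ < ‖z‖ → HarmonicAt v z) (hB : ∀ z, ρ < ‖z‖ → |v z| ≤ B) :
    ∃ (c : ℝ) (b : ℕ → ℂ), ∀ z, ρ < ‖z‖ →
      Summable (fun j => ‖b j * z⁻¹ ^ (j + 1)‖) ∧
        HasSum (fun j => (b j * z⁻¹ ^ (j + 1)).re) (v z - c) := by
  obtain ⟨k, Φ, hΦ, hv'⟩ := exists_eq_add_re_comp_inv hρ hv hB
  set b : ℕ → ℂ := fun n => (n.factorial : ℂ)⁻¹ * iteratedDeriv n Φ 0 with hb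
  refine ⟨k + (b 0).re, fun j => b (j + 1), fun z hz => ?_⟩
  have h1 : HasSum (fun n => b n * z⁻¹ ^ n) (Φ z⁻¹) := by
    refine (Complex.hasSum_taylorSeries_on_ball hΦ (inv_mem_ball_of_lt_norm hρ hz)).congr_fun ?_
    intro n
    simp only [hb, smul_eq_mul, sub_zero]
    ring
  have h2 : HasSum (fun j => b (j + 1) * z⁻¹ ^ (j + 1)) (Φ z⁻¹ - b 0) := by
    simpa using (hasSum_nat_add_iff' 1).2 h1
  refine ⟨h2.summable.norm, ?_⟩
  convert hasSum_re h2 using 1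
  rw [hv' z hz, sub_re]; ring

lemma IsHarmonicOn.harmonicAt {u : ℝ × ℝ → ℂ} {S : Set (ℝ × ℝ)} (hS : IsOpen S)
    (hu : IsHarmonicOn u S) {z : ℂ} (hz : (z.re, z.im) ∈ S) :
    HarmonicAt (fun z : ℂ => u (z.re, z.im)) z := by
  have hcd : ∀ x ∈ S, ContDiffAt ℝ 2 u x := fun x hx => hu.1.contDiffAt (hS.mem_nhds hx)
  set e := equivRealProdCLM
  have hfe : (fun z : ℂ => u (z.re, z.im)) = u ∘ e := rfl
  rw [hfe]
  have hd1 : ∀ w : ℂ, e w ∈ S → ContDiffAt ℝ 2 (u ∘ e) w := fun w hw =>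
    (hcd _ hw).comp w e.contDiff.contDiffAt
  refine ⟨hd1 z hz, ?_⟩
  filter_upwards [(hS.preimage e.continuous).mem_nhds hz] with w hw
  have hw : e w ∈ S := hw
  have hsecond : ∀ ζ : ℂ, iteratedFDeriv ℝ 2 (u ∘ e) w ![ζ, ζ] =
      fderiv ℝ (fun y => fderiv ℝ u y (e ζ)) (e w) (e ζ) := by
    intro ζ
    have hdu : DifferentiableAt ℝ (fderiv ℝ u) (e w) :=
      ((hcd _ hw).fderiv_right (m := 1) (by norm_num)).differentiableAt one_ne_zero
    have hdv : DifferentiableAt ℝ (fderiv ℝ (u ∘ e)) w :=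
      ((hd1 w hw).fderiv_right (m := 1) (by norm_num)).differentiableAt one_ne_zero
    have h1 : (fun y => fderiv ℝ (u ∘ e) y ζ) = (fun y => fderiv ℝ u y (e ζ)) ∘ e := by
      ext y
      rw [e.comp_right_fderiv]; rfl
    have h2 : fderiv ℝ (fderiv ℝ (u ∘ e)) w ζ ζ =
        fderiv ℝ (fun y => fderiv ℝ (u ∘ e) y ζ) w ζ := by
      rw [fderiv_clm_apply hdv (by fun_prop)]; simp
    rw [iteratedFDeriv_two_apply]
    simp only [Matrix.cons_val_zero, Matrix.cons_val_one]
    rw [h2, h1, e.comp_right_fderiv]; rfl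
  have := hu.2 _ hw
  simp only [laplacian_eq_iteratedFDeriv_complexPlane, hsecond, Pi.zero_apply]
  simpa [e, equivRealProdCLM_apply] using this

lemma re_mul_inv_pow_polar (b : ℂ) {r : ℝ} (θ : ℝ) (j : ℕ) :
    (b * (r * Complex.exp (θ * I))⁻¹ ^ (j + 1)).re =
      (b.re * Real.cos ((j + 1) * θ) + b.im * Real.sin ((j + 1) * θ)) * r ^ (-((j : ℤ) + 1)) := by
  have h1 : (r * Complex.exp (θ * I))⁻¹ ^ (j + 1) = ((r ^ (-((j : ℤ) + 1)) : ℝ) : ℂ) *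
      Complex.exp ((-((j + 1) * θ) : ℝ) * I) := by
    have : -((j : ℤ) + 1) = -((j + 1 : ℕ) : ℤ) := by push_cast; ring
    rw [this, zpow_neg, zpow_natCast, mul_inv, mul_pow, ← Complex.exp_neg, ← Complex.exp_nat_mul]
    push_cast
    congr 1
    · rw [inv_pow]
    · congr 1; ring
  rw [h1, mul_left_comm, re_ofReal_mul, mul_re, exp_ofReal_mul_I_re, exp_ofReal_mul_I_im,
    Real.cos_neg, Real.sin_neg]
  ring

theorem bounded_harmonic_exterior_expansion (ρ : ℝ) (hρ : 0 < ρ) (u : ℝ × ℝ → ℂ)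
    (hharm : IsHarmonicOn u {x : ℝ × ℝ | ρ ^ 2 < x.1 ^ 2 + x.2 ^ 2})
    (hbdd : ∃ B, ∀ x : ℝ × ℝ, ρ ^ 2 < x.1 ^ 2 + x.2 ^ 2 → ‖u x‖ ≤ B) :
    ∃ (c0 : ℂ) (cc cs : ℕ → ℂ),
      (∀ r θ : ℝ, ρ < r →
        HasSum
          (fun j : ℕ =>
            (cc j * (Real.cos (((j : ℝ) + 1) * θ) : ℂ)
              + cs j * (Real.sin (((j : ℝ) + 1) * θ) : ℂ)) * (r : ℂ) ^ (-((j : ℤ) + 1)))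
          (u (r * Real.cos θ, r * Real.sin θ) - c0)) ∧
      -- absolute convergence, uniform on each region `r ≥ r₁ > ρ`
      (∀ r₁ : ℝ, ρ < r₁ →
        Summable fun j : ℕ => (‖cc j‖ + ‖cs j‖) * r₁ ^ (-((j : ℤ) + 1))) := by
  obtain ⟨B, hB⟩ := hbdd
  have hmem : ∀ z : ℂ, ρ < ‖z‖ → ρ ^ 2 < z.re ^ 2 + z.im ^ 2 := fun z hz => by
    have h1 := Complex.sq_norm z
    rw [normSq_apply] at h1
    nlinarith
  have hS : IsOpen {x : ℝ × ℝ | ρ ^ 2 < x.1 ^ 2 + x.2 ^ 2} :=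
    isOpen_lt (by fun_prop) (by fun_prop)
  have hU : ∀ z : ℂ, ρ < ‖z‖ → HarmonicAt (fun z : ℂ => u (z.re, z.im)) z := fun z hz =>
    hharm.harmonicAt hS (hmem z hz)
  obtain ⟨c₁, b₁, h₁⟩ := exists_hasSum_re_inv_pow hρ (fun z hz => (hU z hz).comp_CLM reCLM)
    fun z hz => (abs_re_le_norm _).trans (hB _ (hmem z hz))
  obtain ⟨c₂, b₂, h₂⟩ := exists_hasSum_re_inv_pow hρ (fun z hz => (hU z hz).comp_CLM imCLM)
    fun z hz => (abs_im_le_norm _).trans (hB _ (hmem z hz))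
  refine ⟨c₁ + c₂ * I, fun j => (b₁ j).re + (b₂ j).re * I, fun j => (b₁ j).im + (b₂ j).im * I,
    fun r θ hr => ?_, fun r hr => ?_⟩
  · have hr0 : 0 < r := hρ.trans hr
    have hz : ρ < ‖(r * Complex.exp (θ * I) : ℂ)‖ := by
      simpa [norm_exp_ofReal_mul_I, abs_of_pos hr0] using hr
    have hre := Complex.hasSum_ofReal.2 (h₁ _ hz).2
    have him := Complex.hasSum_ofReal.2 (h₂ _ hz).2
    convert hre.add (him.mul_right I) using 1
    · ext j
      rw [re_mul_inv_pow_polar, re_mul_inv_pow_polar]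
      push_cast
      ring
    · have hx : (r * Complex.exp (θ * I) : ℂ).re = r * Real.cos θ := by
        rw [re_ofReal_mul, exp_ofReal_mul_I_re]
      have hy : (r * Complex.exp (θ * I) : ℂ).im = r * Real.sin θ := by
        rw [im_ofReal_mul, exp_ofReal_mul_I_im]
      simp only [Function.comp_apply, hx, hy, reCLM_apply, imCLM_apply]
      conv_lhs => rw [← re_add_im (u (r * Real.cos θ, r * Real.sin θ))]
      push_cast
      ring
  · have hr0 : 0 < r := hρ.trans hr
    have hz : ρ < ‖(r : ℂ)‖ := by simpa [abs_of_pos hr0] using hr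
    refine Summable.of_nonneg_of_le (fun j => by positivity) (fun j => ?_)
      (((h₁ _ hz).1.add (h₂ _ hz).1).mul_left 2)
    have hn : ‖(r : ℂ)⁻¹ ^ (j + 1)‖ = r ^ (-((j : ℤ) + 1)) := by
      have : -((j : ℤ) + 1) = -((j + 1 : ℕ) : ℤ) := by push_cast; ring
      rw [this, zpow_neg, zpow_natCast, norm_pow, norm_inv, norm_real,
        Real.norm_of_nonneg hr0.le, inv_pow]
    have hcoef : ∀ x y : ℝ, ‖(x + y * I : ℂ)‖ ≤ |x| + |y| := fun x y =>
      (norm_add_le _ _).trans_eq (by simp)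
    have hle : ‖((b₁ j).re + (b₂ j).re * I : ℂ)‖ + ‖((b₁ j).im + (b₂ j).im * I : ℂ)‖ ≤
        2 * (‖b₁ j‖ + ‖b₂ j‖) := by
      linarith [hcoef (b₁ j).re (b₂ j).re, hcoef (b₁ j).im (b₂ j).im, abs_re_le_norm (b₁ j),
        abs_re_le_norm (b₂ j), abs_im_le_norm (b₁ j), abs_im_le_norm (b₂ j)]
    rw [norm_mul, norm_mul, hn, ← add_mul, ← mul_assoc]
    gcongr
end

section
/- Let Ω ⊂ ℝ² be the complement of finitely many closed segments Γ_2, …, Γ_n, each joining a fixed point s₁ to a point s_k. Suppose u is harmonic on Ω, bounded, lies locally in the Friedrichs domain (i.e., satisfies the matching conditions u₊ = e^{−2πi α̃} u₋ and ∂_ν u₊ = −e^{−2πi α̃} ∂_ν u₋ across each segment, and u → 0 at the endpoints s_k), and is bounded at infinity. Then u ≡ 0. -/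
open Complex Real Filter Topology Set

/-- rotation by 90 degrees, used to produce a normal vector to a segment -/
def rot90 (v : ℝ × ℝ) : ℝ × ℝ := (-v.2, v.1)

/-- The four-point second difference of `f` at `z` with step `t` in the frame `v`, `rot90 v`. -/
def lap4 (f : ℝ × ℝ → ℝ) (v z : ℝ × ℝ) (t : ℝ) : ℝ :=
  f (z + t • v) + f (z - t • v) + f (z + t • rot90 v) + f (z - t • rot90 v) - 4 * f z

lemma eventually_symm_diff_ge {f : ℝ → ℝ} {d : ℝ} (hf : HasDerivAt f d 0) {c : ℝ} (hc : 0 < c) :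
    ∀ᶠ t in 𝓝[>] (0 : ℝ), -(c * t) ≤ f t + f (-t) - 2 * f 0 := by
  have h1 : HasDerivAt (fun t => f t + f (-t)) 0 0 := by
    have h2 : HasDerivAt (fun t : ℝ => f (-t)) (-d) 0 := by
      have h3 : HasDerivAt f d (-(0 : ℝ)) := by simpa using hf
      have h4 := h3.scomp (0 : ℝ) (hasDerivAt_neg (0 : ℝ))
      rw [neg_one_smul] at h4
      exact h4
    have h5 := hf.add h2
    rw [add_neg_cancel] at h5
    exact h5
  have h4 := (hasDerivAt_iff_isLittleO.1 h1).bound hc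
  filter_upwards [nhdsWithin_le_nhds h4, self_mem_nhdsWithin] with t ht ht0
  have ht0' : (0 : ℝ) < t := ht0
  simp only [neg_zero, sub_zero, smul_zero, Real.norm_eq_abs, abs_of_pos ht0'] at ht
  have := (abs_le.1 ht).1
  linarith

lemma le_of_maximum_principle {K U : Set (ℝ × ℝ)} (hK : IsCompact K) (hU : IsOpen U) (hUK : U ⊆ K)
    {W h g : ℝ × ℝ → ℝ} (hW : UpperSemicontinuousOn W K) (hh : ContinuousOn h K)
    (hg : Continuous g) (hgc : ∀ z v, 0 ≤ g (z + v) + g (z - v) - 2 * g z)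
    (hb : ∀ z ∈ K, z ∉ U → W z ≤ h z)
    (hhd : ∀ z ∈ U, DifferentiableAt ℝ h z)
    (hhL : ∀ z ∈ U, ∀ c > 0, ∀ᶠ t in 𝓝[>] (0 : ℝ), lap4 h (1, 0) z t ≤ c * t ^ 2)
    (hint : ∀ z ∈ U, (∀ c > 0, ∀ᶠ t in 𝓝[>] (0 : ℝ), -(c * t ^ 2) ≤ lap4 W (1, 0) z t) ∨
      ∃ v : ℝ × ℝ, ∃ c d : ℝ, 0 < c ∧ HasDerivAt (fun t : ℝ => W (z + t • v)) d 0 ∧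
        ∀ t > 0, c * t ≤ g (z + t • v) + g (z - t • v) - 2 * g z) :
    ∀ z ∈ K, W z ≤ h z := by
  intro z₀ hz₀
  by_contra! hlt
  set κ : ℝ × ℝ → ℝ := fun z => z.1 ^ 2 + z.2 ^ 2 + g z with hκ
  have hκc : Continuous κ := by fun_prop
  obtain ⟨C₀, hC₀⟩ := hK.exists_bound_of_continuousOn hκc.continuousOn
  set C := max C₀ 1
  have hC1 : 1 ≤ C := le_max_right _ _
  have hC : ∀ z ∈ K, |κ z| ≤ C := fun z hz => (hC₀ z hz).trans (le_max_left _ _)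
  set ε := (W z₀ - h z₀) / (4 * C) with hε
  have hε0 : 0 < ε := div_pos (by linarith) (by linarith)
  have hεC : W z₀ - h z₀ = 4 * (ε * C) := by rw [hε]; field_simp
  have hεC0 : 0 < ε * C := by positivity
  have hk : ∀ z ∈ K, |ε * κ z| ≤ ε * C := fun z hz => by
    rw [abs_mul, abs_of_pos hε0]; exact mul_le_mul_of_nonneg_left (hC z hz) hε0.le
  have husc : UpperSemicontinuousOn (fun z => W z + (ε * κ z - h z)) K := by
    refine hW.add (ContinuousOn.upperSemicontinuousOn ?_)
    exact (continuous_const.mul hκc).continuousOn.sub hh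
  obtain ⟨z, hzK, hmax⟩ := husc.exists_isMaxOn ⟨z₀, hz₀⟩ hK
  have hmax' : ∀ y ∈ K, W y + (ε * κ y - h y) ≤ W z + (ε * κ z - h z) := fun y hy => hmax hy
  have hzU : z ∈ U := by
    by_contra hzU
    have h1 := hb z hzK hzU
    have h2 := hmax' z₀ hz₀
    have h3 := (abs_le.1 (hk z hzK)).2
    have h4 := (abs_le.1 (hk z₀ hz₀)).1
    linarith
  have hnear : ∀ v : ℝ × ℝ, ∀ᶠ t in 𝓝[>] (0 : ℝ), z + t • v ∈ K ∧ z - t • v ∈ K := by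
    intro v
    have c1 : Tendsto (fun t : ℝ => z + t • v) (𝓝 0) (𝓝 z) := by
      have : Continuous fun t : ℝ => z + t • v := by fun_prop
      simpa using this.tendsto 0
    have c2 : Tendsto (fun t : ℝ => z - t • v) (𝓝 0) (𝓝 z) := by
      have : Continuous fun t : ℝ => z - t • v := by fun_prop
      simpa using this.tendsto 0
    have hn := hU.mem_nhds hzU
    filter_upwards [nhdsWithin_le_nhds (c1 hn), nhdsWithin_le_nhds (c2 hn)] with t h1 h2
    exact ⟨hUK h1, hUK h2⟩
  rcases hint z hzU with hA | ⟨v, c, d, hc, hd, hgv⟩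
  · obtain ⟨t, ⟨⟨⟨h1, h2⟩, h3⟩, h4⟩, h5⟩ := (((((hA ε hε0).and (hhL z hzU ε hε0)).and
      (hnear (1, 0))).and (hnear (rot90 (1, 0)))).and self_mem_nhdsWithin).exists
    have ht : (0 : ℝ) < t := h5
    have m1 := hmax' _ h3.1
    have m2 := hmax' _ h3.2
    have m3 := hmax' _ h4.1
    have m4 := hmax' _ h4.2
    have g1 := mul_nonneg hε0.le (hgc z (t • (1, 0)))
    have g2 := mul_nonneg hε0.le (hgc z (t • rot90 (1, 0)))
    simp only [lap4] at h1 h2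
    have e : κ (z + t • (1, 0)) + κ (z - t • (1, 0)) + κ (z + t • rot90 (1, 0)) +
        κ (z - t • rot90 (1, 0)) - 4 * κ z = 4 * t ^ 2 +
        ((g (z + t • (1, 0)) + g (z - t • (1, 0)) - 2 * g z) +
         (g (z + t • rot90 (1, 0)) + g (z - t • rot90 (1, 0)) - 2 * g z)) := by
      simp [hκ, rot90]; ring
    have e' := congrArg (fun x => ε * x) e
    have : 0 < ε * t ^ 2 := by positivity
    nlinarith
  · have hf : ∃ D, HasDerivAt (fun t : ℝ => W (z + t • v) - h (z + t • v) +
        ε * ((z + t • v).1 ^ 2 + (z + t • v).2 ^ 2)) D 0 := by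
      have l1 : HasDerivAt (fun t : ℝ => z + t • v) v 0 := by
        simpa using ((hasDerivAt_id (0 : ℝ)).smul_const v).const_add z
      have l2 : DifferentiableAt ℝ (fun t : ℝ => h (z + t • v)) 0 := by
        refine DifferentiableAt.comp (0 : ℝ) (g := h) ?_ l1.differentiableAt
        simpa using hhd z hzU
      have l3 : DifferentiableAt ℝ (fun t : ℝ => ε * ((z + t • v).1 ^ 2 + (z + t • v).2 ^ 2)) 0 := by
        fun_prop
      exact ⟨_, (hd.sub l2.hasDerivAt).add l3.hasDerivAt⟩
    obtain ⟨D, hD⟩ := hf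
    obtain ⟨t, ⟨h1, h2⟩, h3⟩ := (((eventually_symm_diff_ge hD (c := ε * c / 2) (by positivity)).and
      (hnear v)).and self_mem_nhdsWithin).exists
    have ht : (0 : ℝ) < t := h3
    have m1 := hmax' _ h2.1
    have m2 := hmax' _ h2.2
    have g1 := mul_le_mul_of_nonneg_left (hgv t ht) hε0.le
    have e1 : z + (-t) • v = z - t • v := by rw [neg_smul, sub_eq_add_neg]
    simp only [e1, zero_smul, add_zero] at h1
    simp only [hκ] at m1 m2
    have : 0 < ε * c * t := by positivity
    nlinarith

/-- The squared Euclidean distance from `a` to `z`. -/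
def sqDist (a z : ℝ × ℝ) : ℝ := (z.1 - a.1) ^ 2 + (z.2 - a.2) ^ 2

lemma sqDist_pos {a z : ℝ × ℝ} (h : z ≠ a) : 0 < sqDist a z := by
  unfold sqDist
  by_contra! h0
  refine h (Prod.ext ?_ ?_) <;> nlinarith [sq_nonneg (z.1 - a.1), sq_nonneg (z.2 - a.2)]

lemma continuous_sqDist (a : ℝ × ℝ) : Continuous (sqDist a) := by
  unfold sqDist
  fun_prop

lemma differentiableAt_log_sqDist {a z : ℝ × ℝ} (h : 0 < sqDist a z) :
    DifferentiableAt ℝ (fun y => Real.log (sqDist a y)) z := by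
  refine DifferentiableAt.log ?_ h.ne'
  unfold sqDist
  fun_prop

lemma eventually_abs_lap4_log_sqDist_le {a z : ℝ × ℝ} (h : 0 < sqDist a z) {c : ℝ} (hc : 0 < c) :
    ∀ᶠ t in 𝓝[>] (0 : ℝ),
      |lap4 (fun y => Real.log (sqDist a y)) (1, 0) z t| ≤ c * t ^ 2 := by
  set x := z.1 - a.1 with hx
  set y := z.2 - a.2 with hy
  have hq : sqDist a z = x ^ 2 + y ^ 2 := rfl
  rw [hq] at h
  set G : ℝ → ℝ := fun s => Real.log ((x ^ 2 + y ^ 2) ^ 4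
    + s * (s - 2 * (x ^ 4 - 6 * x ^ 2 * y ^ 2 + y ^ 4))) with hG
  have hGd : DifferentiableAt ℝ G 0 := by
    refine DifferentiableAt.log (by fun_prop) ?_
    simp only [zero_mul, add_zero]
    positivity
  have hO := (hGd.hasDerivAt.isBigO_sub).comp_tendsto
    (k := fun t : ℝ => t ^ 4) (l' := 𝓝[>] (0 : ℝ)) (by
      refine tendsto_nhdsWithin_of_tendsto_nhds ?_
      have : Continuous fun t : ℝ => t ^ 4 := by fun_prop
      simpa using this.tendsto 0)
  have ho : (fun t : ℝ => t ^ 4) =o[𝓝[>] 0] fun t : ℝ => t ^ 2 :=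
    (Asymptotics.isLittleO_pow_pow (by norm_num)).mono nhdsWithin_le_nhds
  have hO' : (fun t : ℝ => G (t ^ 4) - G 0) =o[𝓝[>] 0] fun t : ℝ => t ^ 2 := by
    refine Asymptotics.IsBigO.trans_isLittleO ?_ ho
    simpa [Function.comp_def] using hO
  have key : ∀ᶠ t in 𝓝[>] (0 : ℝ), ∀ p ∈ ({(1, 0), (-1, 0), (0, 1), (0, -1)} : Set (ℝ × ℝ)),
      0 < (x + t * p.1) ^ 2 + (y + t * p.2) ^ 2 := by
    have : ∀ p : ℝ × ℝ, ∀ᶠ t in 𝓝[>] (0 : ℝ), 0 < (x + t * p.1) ^ 2 + (y + t * p.2) ^ 2 := by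
      intro p
      refine nhdsWithin_le_nhds (ContinuousAt.eventually_lt (by fun_prop) (by fun_prop) ?_)
      simpa using h
    simp only [mem_insert_iff, mem_singleton_iff, forall_eq_or_imp, forall_eq]
    exact (this (1, 0)).and ((this (-1, 0)).and ((this (0, 1)).and (this (0, -1))))
  filter_upwards [hO'.bound hc, key] with t ht hp
  have e : lap4 (fun y => Real.log (sqDist a y)) (1, 0) z t = G (t ^ 4) - G 0 := by
    have p1 := hp (1, 0) (by simp)
    have p2 := hp (-1, 0) (by simp)
    have p3 := hp (0, 1) (by simp)
    have p4 := hp (0, -1) (by simp)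
    simp only [mul_one, mul_zero, mul_neg, add_zero] at p1 p2 p3 p4
    have e1 : sqDist a (z + t • (1, 0)) = (x + t) ^ 2 + y ^ 2 := by simp [sqDist, x, y]; ring
    have e2 : sqDist a (z - t • (1, 0)) = (x + -t) ^ 2 + y ^ 2 := by simp [sqDist, x, y]; ring
    have e3 : sqDist a (z + t • rot90 (1, 0)) = x ^ 2 + (y + t) ^ 2 := by
      simp [sqDist, rot90, x, y]; ring
    have e4 : sqDist a (z - t • rot90 (1, 0)) = x ^ 2 + (y + -t) ^ 2 := by
      simp [sqDist, rot90, x, y]; ring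
    simp only [lap4, e1, e2, e3, e4, hq, hG]
    rw [← Real.log_mul p1.ne' p2.ne', ← Real.log_mul (mul_pos p1 p2).ne' p3.ne',
      ← Real.log_mul (mul_pos (mul_pos p1 p2) p3).ne' p4.ne']
    congr 1
    · congr 1; ring
    · rw [zero_mul, add_zero, Real.log_pow]; norm_num
  rw [e]
  simpa using ht

lemma le_of_forall_pos_le_add_mul {x y l : ℝ} (h : ∀ η > 0, x ≤ y + η * l) : x ≤ y := by
  have h1 : Tendsto (fun η : ℝ => y + η * l) (𝓝[>] 0) (𝓝 y) := by
    refine tendsto_nhdsWithin_of_tendsto_nhds ?_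
    have : Continuous fun η : ℝ => y + η * l := by fun_prop
    simpa using this.tendsto 0
  exact ge_of_tendsto h1 (eventually_nhdsWithin_of_forall h)

lemma le_harmonic_majorant_of_gap {F : ℝ × ℝ → ℝ} {p r A C σ a b : ℝ} (hr : 0 < r) (hA : 0 ≤ A)
    (hC : 0 ≤ C) (hFC : ∀ z : ℝ × ℝ, z.1 ∈ Icc a b → |z.2| ≤ r → F z ≤ C)
    (husc : ∀ z : ℝ × ℝ, z.1 ∈ Icc a b → |z.2| ≤ r → (z.2 ≠ 0 ∨ z.1 ∈ Ioo a b) →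
      UpperSemicontinuousAt F z)
    (hL : ∀ z : ℝ × ℝ, z.1 ∈ Ioo a b → |z.2| < r → z.2 ≠ 0 → ∀ c > 0,
      ∀ᶠ t in 𝓝[>] (0 : ℝ), -(c * t ^ 2) ≤ lap4 F (1, 0) z t)
    (hD : ∀ x ∈ Ioo a b, ∃ d, HasDerivAt (fun t : ℝ => F (x, t)) d 0)
    (hσ : σ ^ 2 = 1) (hab : ∀ x ∈ Icc a b, 0 ≤ σ * (x - p) ∧ σ * (x - p) ≤ r)
    (ha : (∀ t, |t| ≤ r → F (a, t) ≤ A) ∨ (a - p) ^ 2 = r ^ 2)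
    (hb : (∀ t, |t| ≤ r → F (b, t) ≤ A) ∨ (b - p) ^ 2 = r ^ 2) :
    ∀ z : ℝ × ℝ, z.1 ∈ Ioo a b → |z.2| < r →
      F z ≤ A + C / r ^ 2 * (z.2 ^ 2 - (z.1 - p) ^ 2 + 2 * r * (σ * (z.1 - p))) := by
  intro z₀ hz₀ hz₀'
  set k := C / r ^ 2 with hk
  have hk0 : 0 ≤ k := by positivity
  have hkC : k * r ^ 2 = C := by rw [hk]; field_simp
  set Q : ℝ × ℝ → ℝ := fun z => z.2 ^ 2 - (z.1 - p) ^ 2 + 2 * r * (σ * (z.1 - p)) with hQ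
  have hsq : ∀ x : ℝ, (x - p) ^ 2 = (σ * (x - p)) ^ 2 := fun x => by rw [mul_pow, hσ, one_mul]
  have hQt : ∀ z : ℝ × ℝ, z.1 ∈ Icc a b → z.2 ^ 2 ≤ Q z := fun z hz => by
    obtain ⟨h1, h2⟩ := hab _ hz
    simp only [hQ, hsq]
    nlinarith
  have hQ0 : ∀ z : ℝ × ℝ, z.1 ∈ Icc a b → 0 ≤ Q z := fun z hz => (sq_nonneg _).trans (hQt z hz)
  have hend : ∀ z : ℝ × ℝ, z.1 ∈ Icc a b → |z.2| ≤ r →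
      ((∀ t, |t| ≤ r → F (z.1, t) ≤ A) ∨ (z.1 - p) ^ 2 = r ^ 2) → F z ≤ A + k * Q z := by
    rintro z hz hzt (h | h)
    · have h1 := h z.2 hzt
      have h2 := mul_nonneg hk0 (hQ0 z hz)
      simp only [Prod.mk.eta] at h1
      linarith
    · have h1 : r ^ 2 ≤ Q z := by
        obtain ⟨h1, h2⟩ := hab _ hz
        have h3 : σ * (z.1 - p) = r := by
          rw [hsq] at h
          exact (sq_eq_sq₀ h1 hr.le).1 h
        simp only [hQ, h, h3]
        nlinarith [sq_nonneg z.2]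
      have := mul_le_mul_of_nonneg_left h1 hk0
      linarith [hFC z hz hzt]
  have hpa : ∀ z : ℝ × ℝ, z.1 ∈ Icc a b → |z.2| ≤ r → ∀ e ∈ Icc a b,
      sqDist (e, 0) z ≤ 2 * r ^ 2 := by
    intro z hz hzt e he
    obtain ⟨h1, h2⟩ := hab _ hz
    obtain ⟨h3, h4⟩ := hab _ he
    have h5 : (z.1 - e) ^ 2 = (σ * (z.1 - p) - σ * (e - p)) ^ 2 := by
      rw [← mul_sub, mul_pow, hσ]; ring
    have h6 : z.2 ^ 2 ≤ r ^ 2 := sq_le_sq' (by linarith [(abs_le.1 hzt).1]) (abs_le.1 hzt).2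
    simp only [sqDist, h5, sub_zero]
    have h7 : (σ * (z.1 - p) - σ * (e - p)) ^ 2 ≤ r ^ 2 := sq_le_sq' (by linarith) (by linarith)
    linarith
  have hab' : a ≤ b := (hz₀.1.trans hz₀.2).le
  have hae : a ∈ Icc a b := left_mem_Icc.2 hab'
  have hbe : b ∈ Icc a b := right_mem_Icc.2 hab'
  set l := Real.log (2 * r ^ 2) with hl
  have hz₀a : 0 < sqDist (a, 0) z₀ := sqDist_pos fun h => by simp [h] at hz₀
  have hz₀b : 0 < sqDist (b, 0) z₀ := sqDist_pos fun h => by simp [h] at hz₀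
  refine le_of_forall_pos_le_add_mul
    (l := (l - Real.log (sqDist (a, 0) z₀)) + (l - Real.log (sqDist (b, 0) z₀))) fun η hη => ?_
  set h : ℝ × ℝ → ℝ := fun z => A + k * Q z +
    η * ((l - Real.log (sqDist (a, 0) z)) + (l - Real.log (sqDist (b, 0) z))) with hh
  set ρ := min (Real.exp (l - C / η)) (min (sqDist (a, 0) z₀) (sqDist (b, 0) z₀) / 2) with hρ
  have hρ0 : 0 < ρ := lt_min (Real.exp_pos _) (half_pos (lt_min hz₀a hz₀b))
  have hρη : C ≤ η * (l - Real.log ρ) := by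
    have h1 : Real.log ρ ≤ l - C / η := by
      rw [← Real.log_exp (l - C / η)]
      exact Real.log_le_log hρ0 (min_le_left _ _)
    have h2 : C / η ≤ l - Real.log ρ := by linarith
    rw [div_le_iff₀ hη] at h2
    linarith
  have hρz : ρ < min (sqDist (a, 0) z₀) (sqDist (b, 0) z₀) := by
    refine (min_le_right _ _).trans_lt (half_lt_self (lt_min hz₀a hz₀b))
  set K : Set (ℝ × ℝ) := (Icc a b ×ˢ Icc (-r) r) ∩
    ({z | ρ ≤ sqDist (a, 0) z} ∩ {z | ρ ≤ sqDist (b, 0) z}) with hK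
  set U : Set (ℝ × ℝ) := (Ioo a b ×ˢ Ioo (-r) r) ∩
    ({z | ρ < sqDist (a, 0) z} ∩ {z | ρ < sqDist (b, 0) z}) with hU
  have hlog : ∀ z ∈ K, Real.log (sqDist (a, 0) z) ≤ l ∧ Real.log (sqDist (b, 0) z) ≤ l := by
    rintro z ⟨⟨hz1, hz2⟩, hz3, hz4⟩
    have hzt := abs_le.2 hz2
    exact ⟨Real.log_le_log (hρ0.trans_le hz3) (hpa z hz1 hzt a hae),
      Real.log_le_log (hρ0.trans_le hz4) (hpa z hz1 hzt b hbe)⟩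
  have hhK : ∀ z ∈ K, A + k * Q z ≤ h z := by
    intro z hz
    obtain ⟨h1, h2⟩ := hlog z hz
    have := mul_nonneg hη.le (add_nonneg (sub_nonneg.2 h1) (sub_nonneg.2 h2))
    simp only [hh]
    linarith
  have hmain := le_of_maximum_principle (K := K) (U := U) (W := F) (h := h) (g := fun z => |z.2|)
    ((isCompact_Icc.prod isCompact_Icc).inter_right
      ((isClosed_le continuous_const (continuous_sqDist _)).inter
        (isClosed_le continuous_const (continuous_sqDist _))))
    ((isOpen_Ioo.prod isOpen_Ioo).inter
      ((isOpen_lt continuous_const (continuous_sqDist _)).inter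
        (isOpen_lt continuous_const (continuous_sqDist _))))
    (inter_subset_inter (prod_mono Ioo_subset_Icc_self Ioo_subset_Icc_self)
      (inter_subset_inter (fun z hz => (show ρ < sqDist (a, 0) z from hz).le)
        (fun z hz => (show ρ < sqDist (b, 0) z from hz).le)))
    ?_ ?_ (by fun_prop) ?_ ?_ ?_ ?_ ?_ z₀ ?_
  · exact hmain
  · rintro z ⟨⟨hz1, hz2⟩, hz3, hz4⟩
    refine (husc z hz1 (abs_le.2 hz2) ?_).upperSemicontinuousWithinAt _
    by_contra! hcon
    have h1 : z.1 ≠ a := fun h1 => by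
      have : sqDist (a, 0) z = 0 := by simp [sqDist, h1, hcon.1]
      have hz3' : ρ ≤ sqDist (a, 0) z := hz3
      linarith
    have h2 : z.1 ≠ b := fun h1 => by
      have : sqDist (b, 0) z = 0 := by simp [sqDist, h1, hcon.1]
      have hz4' : ρ ≤ sqDist (b, 0) z := hz4
      linarith
    exact hcon.2 ⟨lt_of_le_of_ne hz1.1 h1.symm, lt_of_le_of_ne hz1.2 h2⟩
  · rintro z ⟨⟨hz1, hz2⟩, hz3, hz4⟩
    refine ContinuousAt.continuousWithinAt ?_
    have d1 := (differentiableAt_log_sqDist (hρ0.trans_le hz3)).continuousAt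
    have d2 := (differentiableAt_log_sqDist (hρ0.trans_le hz4)).continuousAt
    simp only [hh, hQ]
    fun_prop
  · intro z v
    simp only [Prod.snd_add, Prod.snd_sub]
    have := abs_add_le (z.2 + v.2) (z.2 - v.2)
    rw [show z.2 + v.2 + (z.2 - v.2) = 2 * z.2 by ring, abs_mul, abs_two] at this
    linarith
  · intro z hzK hzU
    have hz := hzK
    obtain ⟨⟨hz1, hz2⟩, hz3, hz4⟩ := hzK
    have hzt := abs_le.2 hz2
    obtain ⟨g1, g2⟩ := hlog z hz
    have g0 := mul_nonneg hk0 (hQ0 z hz1)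
    by_cases c1 : z.1 = a
    · exact (hend z hz1 hzt (by rw [c1]; exact ha)).trans (hhK z hz)
    by_cases c2 : z.1 = b
    · exact (hend z hz1 hzt (by rw [c2]; exact hb)).trans (hhK z hz)
    by_cases c3 : |z.2| = r
    · have h1 := hQt z hz1
      rw [← sq_abs, c3] at h1
      have := mul_le_mul_of_nonneg_left h1 hk0
      linarith [hFC z hz1 hzt, hhK z hz]
    by_cases c4 : sqDist (a, 0) z = ρ
    · have : C ≤ η * (l - Real.log (sqDist (a, 0) z)) := by rw [c4]; exact hρη
      have := mul_nonneg hη.le (sub_nonneg.2 g2)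
      simp only [hh]
      linarith [hFC z hz1 hzt]
    by_cases c5 : sqDist (b, 0) z = ρ
    · have : C ≤ η * (l - Real.log (sqDist (b, 0) z)) := by rw [c5]; exact hρη
      have := mul_nonneg hη.le (sub_nonneg.2 g1)
      simp only [hh]
      linarith [hFC z hz1 hzt]
    refine absurd ⟨⟨⟨lt_of_le_of_ne hz1.1 (Ne.symm c1), lt_of_le_of_ne hz1.2 c2⟩,
      abs_lt.1 (lt_of_le_of_ne hzt c3)⟩, lt_of_le_of_ne hz3 (Ne.symm c4),
      lt_of_le_of_ne hz4 (Ne.symm c5)⟩ hzU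
  · rintro z ⟨⟨hz1, hz2⟩, hz3, hz4⟩
    have d1 := differentiableAt_log_sqDist (hρ0.trans hz3)
    have d2 := differentiableAt_log_sqDist (hρ0.trans hz4)
    simp only [hh, hQ]
    fun_prop
  · rintro z ⟨⟨hz1, hz2⟩, hz3, hz4⟩ c hc
    have hc' : 0 < c / (2 * η) := by positivity
    filter_upwards [eventually_abs_lap4_log_sqDist_le (hρ0.trans hz3) hc',
      eventually_abs_lap4_log_sqDist_le (hρ0.trans hz4) hc'] with t h1 h2
    have e : lap4 h (1, 0) z t = -(η * (lap4 (fun y => Real.log (sqDist (a, 0) y)) (1, 0) z t +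
        lap4 (fun y => Real.log (sqDist (b, 0) y)) (1, 0) z t)) := by
      simp only [lap4, hh, hQ, Prod.fst_add, Prod.snd_add, Prod.fst_sub, Prod.snd_sub, Prod.smul_mk,
        rot90, smul_eq_mul, neg_zero, mul_zero, mul_one]
      ring
    rw [e]
    have h3 := mul_le_mul_of_nonneg_left
      (add_le_add (neg_le_of_abs_le h1) (neg_le_of_abs_le h2)) hη.le
    have h4 : η * (-(c / (2 * η) * t ^ 2) + -(c / (2 * η) * t ^ 2)) = -(c * t ^ 2) := by
      field_simp; ring
    linarith
  · rintro z ⟨⟨hz1, hz2⟩, hz3, hz4⟩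
    by_cases h0 : z.2 = 0
    · obtain ⟨d, hd⟩ := hD _ hz1
      refine Or.inr ⟨(0, 1), 2, d, two_pos, ?_, fun t ht => ?_⟩
      · have : (fun t : ℝ => F (z + t • (0, 1))) = fun t => F (z.1, t) := by
          funext t
          congr 1
          ext <;> simp [h0]
        rw [this]
        exact hd
      · simp [h0, abs_of_pos ht]
        linarith
    · exact Or.inl (hL z hz1 (abs_lt.2 hz2) h0)
  · exact ⟨⟨Ioo_subset_Icc_self hz₀, abs_le.1 hz₀'.le⟩, (hρz.trans_le (min_le_left _ _)).le,
      (hρz.trans_le (min_le_right _ _)).le⟩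

lemma exists_gap {E : Set ℝ} (hE : IsClosed E) {x a₀ b₀ : ℝ} (hx : x ∉ E) (ha : a₀ < x)
    (hb : x < b₀) : ∃ a b, a₀ ≤ a ∧ a < x ∧ x < b ∧ b ≤ b₀ ∧ (a ∈ E ∨ a = a₀) ∧ (b ∈ E ∨ b = b₀) ∧
      ∀ y ∈ Ioo a b, y ∉ E := by
  obtain ⟨a, ⟨haE, ha1, ha2⟩, hamax⟩ :=
    ((isCompact_Icc (a := a₀) (b := x)).inter_left
      (hE.union (isClosed_singleton (x := a₀)))).exists_isGreatest ⟨a₀, Or.inr rfl, le_rfl, ha.le⟩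
  obtain ⟨b, ⟨hbE, hb1, hb2⟩, hbmin⟩ :=
    ((isCompact_Icc (a := x) (b := b₀)).inter_left
      (hE.union (isClosed_singleton (x := b₀)))).exists_isLeast ⟨b₀, Or.inr rfl, hb.le, le_rfl⟩
  have hax : a < x := lt_of_le_of_ne ha2 fun h => by
    rcases haE with h1 | h1
    · exact hx (h ▸ h1)
    · exact ha.ne ((show a = a₀ from h1).symm.trans h)
  have hxb : x < b := lt_of_le_of_ne hb1 fun h => by
    rcases hbE with h1 | h1
    · exact hx (h ▸ h1)
    · exact hb.ne (h.trans (show b = b₀ from h1))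
  refine ⟨a, b, ha1, hax, hxb, hb2, haE, hbE, fun y hy hyE => ?_⟩
  rcases le_total y x with h | h
  · exact (hamax ⟨Or.inl hyE, ha1.trans hy.1.le, h⟩).not_gt hy.1
  · exact (hbmin ⟨Or.inl hyE, h, hy.2.le.trans hb2⟩).not_gt hy.2

lemma upperSemicontinuousAt_of_uniform_lipschitz {F : ℝ × ℝ → ℝ} {E : Set ℝ} {p δ C M : ℝ}
    (hE : IsClosed E) (hp : p ∈ E) (hδ : 0 < δ) (hM : 0 ≤ M)
    (h0 : ∀ z : ℝ × ℝ, |z.1 - p| < δ → |z.2| < δ → 0 ≤ F z ∧ F z ≤ C)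
    (hc : ∀ z : ℝ × ℝ, |z.1 - p| < δ → |z.2| < δ → z.2 ≠ 0 → ContinuousAt F z)
    (hL : ∀ z : ℝ × ℝ, |z.1 - p| < δ → |z.2| < δ → z.2 ≠ 0 → ∀ c > 0,
      ∀ᶠ t in 𝓝[>] (0 : ℝ), -(c * t ^ 2) ≤ lap4 F (1, 0) z t)
    (hD : ∀ x, |x - p| < δ → ∃ d, HasDerivAt (fun t : ℝ => F (x, t)) d 0)
    (hlip : ∀ x ∈ E, |x - p| < δ → ∀ t, |t| < δ → |F (x, t) - F (x, 0)| ≤ M * |t|)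
    (hgood : ∀ x, x ∉ E → |x - p| < δ → UpperSemicontinuousAt F (x, 0)) :
    UpperSemicontinuousAt F (p, 0) := by
  intro y hy
  set e := (y - F (p, 0)) / 8 with he
  have he0 : 0 < e := div_pos (by linarith) (by norm_num)
  obtain ⟨s, hs0, hsδ, hsM⟩ : ∃ s : ℝ, 0 < s ∧ s < δ ∧ M * s ≤ e := by
    refine ⟨min (δ / 2) (e / (M + 1)), by positivity, ?_, ?_⟩
    · exact (min_le_left _ _).trans_lt (by linarith)
    · calc M * min (δ / 2) (e / (M + 1)) ≤ (M + 1) * (e / (M + 1)) := by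
            apply mul_le_mul (by linarith) (min_le_right _ _) (by positivity) (by linarith)
        _ = e := by field_simp
  have hcont : ContinuousAt (fun x : ℝ => F (x, s)) p := by
    have h1 := hc (p, s) (by simpa using hδ) (by simpa [abs_of_pos hs0] using hsδ) hs0.ne'
    exact ContinuousAt.comp (f := fun x : ℝ => (x, s)) h1 (by fun_prop)
  obtain ⟨r₀, hr₀, hr₀'⟩ := Metric.continuousAt_iff.1 hcont e he0
  set r := min (r₀ / 2) s with hr
  have hrpos : 0 < r := lt_min (half_pos hr₀) hs0
  have hrs : r ≤ s := min_le_right _ _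
  have hrδ : r < δ := hrs.trans_lt hsδ
  set A := F (p, 0) + 4 * e with hA
  have hF0 := h0 (p, 0) (by simpa using hδ) (by simpa using hδ)
  have hA0 : 0 ≤ A := by linarith [hF0.1]
  have hC0 : 0 ≤ C := hF0.1.trans hF0.2
  have hEA : ∀ x ∈ E, |x - p| ≤ r → ∀ t, |t| ≤ r → F (x, t) ≤ A := by
    intro x hx hxp t ht
    have h1 := hr₀' (x := x) (by
      rw [Real.dist_eq]
      exact (hxp.trans (min_le_left _ _)).trans_lt (half_lt_self hr₀))
    rw [Real.dist_eq] at h1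
    have h2 := hlip x hx (hxp.trans_lt hrδ) s (by rwa [abs_of_pos hs0])
    have h3 := hlip p hp (by simpa using hδ) s (by rwa [abs_of_pos hs0])
    have h4 := hlip x hx (hxp.trans_lt hrδ) t (ht.trans_lt hrδ)
    have h5 : M * |t| ≤ M * s := mul_le_mul_of_nonneg_left (ht.trans hrs) hM
    rw [abs_of_pos hs0] at h2 h3
    rw [abs_lt] at h1
    rw [abs_le] at h2 h3 h4
    linarith [h1.1, h1.2, h2.1, h2.2, h3.1, h3.2, h4.1, h4.2]
  set k := C / r ^ 2 with hk
  have hgap : ∀ (σ a₀ b₀ : ℝ), σ ^ 2 = 1 → (a₀ ∈ E ∨ (a₀ - p) ^ 2 = r ^ 2) →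
      (b₀ ∈ E ∨ (b₀ - p) ^ 2 = r ^ 2) →
      (∀ x ∈ Icc a₀ b₀, 0 ≤ σ * (x - p) ∧ σ * (x - p) ≤ r) →
      ∀ z : ℝ × ℝ, z.1 ∉ E → z.1 ∈ Ioo a₀ b₀ → |z.2| < r →
        F z ≤ A + k * (z.2 ^ 2 - (z.1 - p) ^ 2 + 2 * r * (σ * (z.1 - p))) := by
    intro σ a₀ b₀ hσ ha₀ hb₀ hσr z hzE hz hz2
    obtain ⟨a, b, h1, h2, h3, h4, ha, hb, hab⟩ := exists_gap hE hzE hz.1 hz.2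
    have hIcc : Icc a b ⊆ Icc a₀ b₀ := Icc_subset_Icc h1 h4
    have habs : ∀ x ∈ Icc a b, |x - p| ≤ r := by
      intro x hx
      obtain ⟨g1, g2⟩ := hσr x (hIcc hx)
      have : |σ| = 1 := by rw [← sq_eq_sq₀ (abs_nonneg _) zero_le_one, sq_abs, hσ, one_pow]
      rw [← one_mul |x - p|, ← this, ← abs_mul, abs_of_nonneg g1]
      exact g2
    have hae : a ∈ Icc a b := left_mem_Icc.2 (h2.trans h3).le
    have hbe : b ∈ Icc a b := right_mem_Icc.2 (h2.trans h3).le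
    refine le_harmonic_majorant_of_gap hrpos hA0 hC0 ?_ ?_ ?_ ?_ hσ (fun x hx => hσr x (hIcc hx))
      ?_ ?_ z ⟨h2, h3⟩ hz2
    · exact fun w hw hw2 => (h0 w ((habs _ hw).trans_lt hrδ) (hw2.trans_lt hrδ)).2
    · intro w hw hw2 hw3
      by_cases hw0 : w.2 = 0
      · have hw1 : w.1 ∈ Ioo a b := hw3.resolve_left (fun h => h hw0)
        have := hgood w.1 (hab _ hw1) ((habs _ hw).trans_lt hrδ)
        rwa [← hw0, Prod.mk.eta] at this
      · exact (hc w ((habs _ hw).trans_lt hrδ) (hw2.trans_lt hrδ) hw0).upperSemicontinuousAt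
    · exact fun w hw hw2 hw0 => hL w ((habs _ (Ioo_subset_Icc_self hw)).trans_lt hrδ)
        (hw2.trans hrδ) hw0
    · exact fun x hx => hD x ((habs _ (Ioo_subset_Icc_self hx)).trans_lt hrδ)
    · rcases ha with ha | ha
      · exact Or.inl (hEA a ha (habs a hae))
      · rcases ha₀ with ha₀ | ha₀
        · exact Or.inl (hEA a (ha ▸ ha₀) (habs a hae))
        · exact Or.inr (ha ▸ ha₀)
    · rcases hb with hb | hb
      · exact Or.inl (hEA b hb (habs b hbe))
      · rcases hb₀ with hb₀ | hb₀
        · exact Or.inl (hEA b (hb ▸ hb₀) (habs b hbe))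
        · exact Or.inr (hb ▸ hb₀)
  have hbound : ∀ z : ℝ × ℝ, |z.1 - p| < r → |z.2| < r →
      F z ≤ A + k * (z.2 ^ 2 - (z.1 - p) ^ 2 + 2 * r * |z.1 - p|) := by
    intro z hz1 hz2
    by_cases hzE : z.1 ∈ E
    · have h1 := hEA z.1 hzE hz1.le z.2 hz2.le
      have hk0 : 0 ≤ k := by positivity
      have h2 : 0 ≤ z.2 ^ 2 - (z.1 - p) ^ 2 + 2 * r * |z.1 - p| := by
        rw [← sq_abs (z.1 - p)]
        nlinarith [abs_nonneg (z.1 - p), sq_nonneg z.2]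
      have := mul_nonneg hk0 h2
      simp only [Prod.mk.eta] at h1
      linarith
    · rw [abs_lt] at hz1
      rcases lt_trichotomy z.1 p with h | h | h
      · have := hgap (-1) (p - r) p (by norm_num) (Or.inr (by ring)) (Or.inl hp)
          (fun x hx => ⟨by linarith [hx.2], by linarith [hx.1]⟩) z hzE ⟨by linarith, h⟩ hz2
        rw [abs_of_neg (sub_neg.2 h)]
        rwa [neg_one_mul] at this
      · exact absurd (h ▸ hp) hzE
      · have := hgap 1 p (p + r) (by norm_num) (Or.inl hp) (Or.inr (by ring))
          (fun x hx => ⟨by linarith [hx.1], by linarith [hx.2]⟩) z hzE ⟨h, by linarith⟩ hz2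
        rw [abs_of_pos (sub_pos.2 h)]
        rwa [one_mul] at this
  have e1 : ∀ᶠ z : ℝ × ℝ in 𝓝 (p, 0), |z.1 - p| < r :=
    ContinuousAt.eventually_lt (by fun_prop) (by fun_prop) (by simpa using hrpos)
  have e2 : ∀ᶠ z : ℝ × ℝ in 𝓝 (p, 0), |z.2| < r :=
    ContinuousAt.eventually_lt (by fun_prop) (by fun_prop) (by simpa using hrpos)
  have e3 : ∀ᶠ z : ℝ × ℝ in 𝓝 (p, 0),
      A + k * (z.2 ^ 2 - (z.1 - p) ^ 2 + 2 * r * |z.1 - p|) < y :=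
    ContinuousAt.eventually_lt (by fun_prop) (by fun_prop) (by simp; linarith)
  filter_upwards [e1, e2, e3] with z h1 h2 h3
  exact (hbound z h1 h2).trans_lt h3

lemma exists_lipschitz_bound_of_hasDerivAt {f : ℝ → ℝ} {d : ℝ} (hf : HasDerivAt f d 0) :
    ∃ m : ℕ, ∀ t : ℝ, |t| < 1 / ((m : ℝ) + 1) → |f t - f 0| ≤ m * |t| := by
  obtain ⟨c, hc⟩ := hf.isBigO_sub.bound
  obtain ⟨δ, hδ, hδ'⟩ := Metric.eventually_nhds_iff.1 hc
  obtain ⟨m₁, hm₁⟩ := exists_nat_ge c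
  obtain ⟨m₂, hm₂⟩ := exists_nat_one_div_lt hδ
  refine ⟨max m₁ m₂, fun t ht => ?_⟩
  have h1 : |t| < δ := by
    refine ht.trans_le (le_trans ?_ hm₂.le)
    apply one_div_le_one_div_of_le (by positivity)
    have : (m₂ : ℝ) ≤ ((max m₁ m₂ : ℕ) : ℝ) := by exact_mod_cast le_max_right _ _
    linarith
  have h2 := hδ' (y := t) (by simpa [Real.dist_eq] using h1)
  simp only [Real.norm_eq_abs, sub_zero] at h2
  refine h2.trans (mul_le_mul_of_nonneg_right (hm₁.trans ?_) (abs_nonneg _))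
  exact_mod_cast le_max_left _ _

lemma upperSemicontinuousAt_of_hasDerivAt_transverse {F : ℝ × ℝ → ℝ} {R C : ℝ}
    (h0 : ∀ z : ℝ × ℝ, |z.1| < R → |z.2| < R → 0 ≤ F z ∧ F z ≤ C)
    (hc : ∀ z : ℝ × ℝ, |z.1| < R → |z.2| < R → z.2 ≠ 0 → ContinuousAt F z)
    (hL : ∀ z : ℝ × ℝ, |z.1| < R → |z.2| < R → z.2 ≠ 0 → ∀ c > 0,
      ∀ᶠ t in 𝓝[>] (0 : ℝ), -(c * t ^ 2) ≤ lap4 F (1, 0) z t)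
    (hD : ∀ x, |x| < R → ∃ d, HasDerivAt (fun t : ℝ => F (x, t)) d 0)
    {x₀ : ℝ} (hx₀ : |x₀| < R) : UpperSemicontinuousAt F (x₀, 0) := by
  by_contra hbad
  obtain ⟨ρ, hρ1, hρ2⟩ := exists_between hx₀
  set B : Set ℝ := {x | |x| < ρ ∧ ¬ UpperSemicontinuousAt F (x, 0)} with hB
  set E := closure B with hE
  have hBE : B ⊆ E := subset_closure
  have hER : ∀ x ∈ E, |x| < R := by
    intro x hx
    have : E ⊆ {x | |x| ≤ ρ} :=
      closure_minimal (fun x hx => hx.1.le) (isClosed_le continuous_abs continuous_const)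
    exact (this hx).trans_lt hρ2
  have hne : Nonempty E := ⟨⟨x₀, hBE ⟨hρ1, hbad⟩⟩⟩
  have : CompleteSpace E := isClosed_closure.completeSpace_coe
  have hlipx : ∀ x : E, ∃ m : ℕ, ∀ t : ℝ, |t| < 1 / ((m : ℝ) + 1) →
      |F (x, t) - F (x, 0)| ≤ m * |t| := fun x => by
    obtain ⟨d, hd⟩ := hD x (hER x x.2)
    exact exists_lipschitz_bound_of_hasDerivAt hd
  set S : ℕ → Set E := fun m => {x | ∀ t t', t ≠ 0 → t' ≠ 0 → |t| < min R (1 / (m + 1)) →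
    |t'| < min R (1 / (m + 1)) → |F (x, t) - F (x, t')| ≤ m * (|t| + |t'|)} with hS
  have hScl : ∀ m, IsClosed (S m) := by
    intro m
    have hFc : ∀ t, t ≠ 0 → |t| < min R (1 / ((m : ℝ) + 1)) →
        Continuous fun x : E => F ((x : ℝ), t) := by
      intro t ht htm
      refine continuous_iff_continuousAt.2 fun x => ?_
      exact ContinuousAt.comp (f := fun x : E => ((x : ℝ), t))
        (hc (x, t) (hER x x.2) (htm.trans_le (min_le_left _ _)) ht) (by fun_prop)
    simp only [hS, ofPred_forall]
    refine isClosed_iInter fun t => isClosed_iInter fun t' => isClosed_iInter fun ht =>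
      isClosed_iInter fun ht' => isClosed_iInter fun h => isClosed_iInter fun h' => ?_
    exact isClosed_le ((hFc t ht h).sub (hFc t' ht' h')).abs continuous_const
  have hSU : ⋃ m, S m = univ := by
    refine eq_univ_of_forall fun x => mem_iUnion.2 ?_
    obtain ⟨m, hm⟩ := hlipx x
    refine ⟨m, fun t t' _ _ h h' => ?_⟩
    have h1 := hm t (h.trans_le (min_le_right _ _))
    have h2 := hm t' (h'.trans_le (min_le_right _ _))
    rw [abs_sub_comm] at h2
    have := abs_sub_le (F (x, t)) (F (x, 0)) (F (x, t'))
    linarith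
  obtain ⟨m, x₁, hx₁⟩ := nonempty_interior_of_iUnion_of_closed hScl hSU
  obtain ⟨δ₁, hδ₁, hball⟩ := Metric.isOpen_iff.1 isOpen_interior x₁ hx₁
  obtain ⟨p, hpB, hpx⟩ := Metric.mem_closure_iff.1 x₁.2 δ₁ hδ₁
  have hRpos : 0 < R := (abs_nonneg x₀).trans_lt hx₀
  set δ := min (min (δ₁ - dist (x₁ : ℝ) p) (ρ - |p|)) (min R (1 / ((m : ℝ) + 1))) with hδ
  have hδ0 : 0 < δ := lt_min (lt_min (sub_pos.2 hpx) (sub_pos.2 hpB.1))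
    (lt_min hRpos (by positivity))
  have hd1 : δ ≤ δ₁ - dist (x₁ : ℝ) p := (min_le_left _ _).trans (min_le_left _ _)
  have hd2 : δ ≤ ρ - |p| := (min_le_left _ _).trans (min_le_right _ _)
  have hd3 : δ ≤ min R (1 / ((m : ℝ) + 1)) := min_le_right _ _
  have hxρ : ∀ x, |x - p| < δ → |x| < ρ := by
    intro x hx
    have := abs_sub_abs_le_abs_sub x p
    linarith
  have hxR : ∀ x, |x - p| < δ → |x| < R := fun x hx => (hxρ x hx).trans hρ2
  have htR : ∀ t, |t| < δ → |t| < R := fun t ht => ht.trans_le (hd3.trans (min_le_left _ _))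
  refine hpB.2 (upperSemicontinuousAt_of_uniform_lipschitz (E := E) (C := C) (M := m)
    isClosed_closure (hBE hpB) hδ0 (Nat.cast_nonneg m)
    (fun z h1 h2 => h0 z (hxR _ h1) (htR _ h2))
    (fun z h1 h2 => hc z (hxR _ h1) (htR _ h2))
    (fun z h1 h2 => hL z (hxR _ h1) (htR _ h2))
    (fun x h1 => hD x (hxR _ h1)) ?_ ?_)
  · intro x hxE hx t ht
    rcases eq_or_ne t 0 with rfl | ht0
    · simp
    have hxS : (⟨x, hxE⟩ : E) ∈ S m := by
      refine interior_subset (hball ?_)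
      rw [Metric.mem_ball, Subtype.dist_eq]
      have h1 := dist_triangle_right x (x₁ : ℝ) p
      rw [Real.dist_eq x p] at h1
      show dist x (x₁ : ℝ) < δ₁
      linarith
    obtain ⟨d, hd⟩ := hD x (hxR x hx)
    have l1 : Tendsto (fun t' => |F (x, t) - F (x, t')|) (𝓝[≠] 0) (𝓝 |F (x, t) - F (x, 0)|) :=
      (tendsto_const_nhds.sub (hd.continuousAt.tendsto.mono_left nhdsWithin_le_nhds)).abs
    have l2 : Tendsto (fun t' : ℝ => (m : ℝ) * (|t| + |t'|)) (𝓝[≠] 0) (𝓝 (m * |t|)) := by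
      have : Continuous fun t' : ℝ => (m : ℝ) * (|t| + |t'|) := by fun_prop
      simpa using (this.tendsto 0).mono_left (nhdsWithin_le_nhds (s := {0}ᶜ))
    refine le_of_tendsto_of_tendsto l1 l2 ?_
    have ev : ∀ᶠ t' in 𝓝 (0 : ℝ), |t'| < δ :=
      ContinuousAt.eventually_lt (by fun_prop) (by fun_prop) (by simpa using hδ0)
    filter_upwards [nhdsWithin_le_nhds ev, self_mem_nhdsWithin] with t' h1 h2
    exact hxS t t' ht0 h2 (ht.trans_le hd3) (h1.trans_le hd3)
  · intro x hxE hx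
    by_contra hcon
    exact hxE (hBE ⟨hxρ x hx, hcon⟩)

lemma norm_le_mul_sq_of_hasDerivAt {Ψ ψ : ℝ → ℂ} (h0 : Ψ 0 = 0)
    (hd : ∀ᶠ t in 𝓝 (0 : ℝ), HasDerivAt Ψ (ψ t) t) (ho : ψ =o[𝓝 0] fun t : ℝ => t) {c : ℝ}
    (hc : 0 < c) : ∀ᶠ t in 𝓝[>] (0 : ℝ), ‖Ψ t‖ ≤ c * t ^ 2 := by
  obtain ⟨δ, hδ, hδ'⟩ := Metric.eventually_nhds_iff.1 (hd.and (ho.bound hc))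
  filter_upwards [Ioo_mem_nhdsGT hδ] with t ht
  have hin : ∀ x ∈ Icc 0 t, dist x 0 < δ := fun x hx => by
    rw [Real.dist_eq, sub_zero, abs_of_nonneg hx.1]
    exact hx.2.trans_lt ht.2
  have key := (convex_Icc 0 t).norm_image_sub_le_of_norm_hasDerivWithin_le (C := c * t)
    (fun x hx => (hδ' (hin x hx)).1.hasDerivWithinAt) (fun x hx => by
      refine (hδ' (hin x hx)).2.trans (mul_le_mul_of_nonneg_left ?_ hc.le)
      rw [Real.norm_eq_abs, abs_of_nonneg hx.1]
      exact hx.2) (left_mem_Icc.2 ht.1.le) (right_mem_Icc.2 ht.1.le)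
  rw [h0, sub_zero, sub_zero, Real.norm_eq_abs, abs_of_pos ht.1] at key
  linarith

lemma IsHarmonicOn.eventually_norm_symm_diff_le {u : ℝ × ℝ → ℂ} {S : Set (ℝ × ℝ)}
    (hu : IsHarmonicOn u S) (hS : IsOpen S) {z : ℝ × ℝ} (hz : z ∈ S) (v : ℝ × ℝ) {c : ℝ}
    (hc : 0 < c) : ∀ᶠ t in 𝓝[>] (0 : ℝ),
      ‖u (z + t • v) + u (z - t • v) + u (z + t • rot90 v) + u (z - t • rot90 v) - 4 * u z‖
        ≤ c * t ^ 2 := by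
  have hdiff : ∀ y ∈ S, HasFDerivAt u (fderiv ℝ u y) y := fun y hy =>
    ((hu.1.contDiffAt (hS.mem_nhds hy)).differentiableAt (by norm_num)).hasFDerivAt
  have hD : DifferentiableAt ℝ (fderiv ℝ u) z :=
    (((hu.1.fderiv_of_isOpen hS (m := 1) (by norm_num)).contDiffAt
      (hS.mem_nhds hz)).differentiableAt (by norm_num))
  set B := fderiv ℝ (fderiv ℝ u) z with hB
  have hDB : HasFDerivAt (fderiv ℝ u) B z := hD.hasFDerivAt
  have hBe : ∀ e : ℝ × ℝ, fderiv ℝ (fun y => fderiv ℝ u y e) z e = B e e := fun e => by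
    have := (hDB.clm_apply (hasFDerivAt_const e z)).fderiv
    rw [this]
    simp
  have hlap : B (1, 0) (1, 0) + B (0, 1) (0, 1) = 0 := by
    rw [← hBe, ← hBe]
    exact hu.2 z hz
  have hlapv : B v v + B (rot90 v) (rot90 v) = 0 := by
    have e1 : v = v.1 • ((1, 0) : ℝ × ℝ) + v.2 • ((0, 1) : ℝ × ℝ) := by ext <;> simp
    have e2 : rot90 v = (-v.2) • ((1, 0) : ℝ × ℝ) + v.1 • ((0, 1) : ℝ × ℝ) := by
      ext <;> simp [rot90]
    rw [e2]
    nth_rewrite 1 2 [e1]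
    simp only [map_add, map_smul, add_apply, smul_apply]
    have h2 : B (0, 1) (0, 1) = -B (1, 0) (1, 0) := by linear_combination hlap
    simp only [h2, Complex.real_smul]
    push_cast
    ring
  have hline : ∀ w : ℝ × ℝ, ∀ t : ℝ, HasDerivAt (fun t : ℝ => z + t • w) w t := fun w t => by
    simpa using ((hasDerivAt_id t).smul_const w).const_add z
  have hmem : ∀ w : ℝ × ℝ, ∀ᶠ t in 𝓝 (0 : ℝ), z + t • w ∈ S := fun w => by
    have h1 := (hline w 0).continuousAt
    refine h1.eventually_mem (hS.mem_nhds ?_)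
    simpa using hz
  have hu1 : ∀ w : ℝ × ℝ, ∀ᶠ t in 𝓝 (0 : ℝ),
      HasDerivAt (fun t : ℝ => u (z + t • w)) (fderiv ℝ u (z + t • w) w) t := fun w => by
    filter_upwards [hmem w] with t ht
    exact (hdiff _ ht).comp_hasDerivAt t (hline w t)
  have hu2 : ∀ w : ℝ × ℝ, HasDerivAt (fun t : ℝ => fderiv ℝ u (z + t • w) w) (B w w) 0 := by
    intro w
    have h1 : HasFDerivAt (fderiv ℝ u) B (z + (0 : ℝ) • w) := by simpa using hDB
    have h2 : HasDerivAt (fun t : ℝ => fderiv ℝ u (z + t • w)) (B w) 0 :=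
      h1.comp_hasDerivAt (0 : ℝ) (hline w 0)
    have h3 := h2.clm_apply (hasDerivAt_const (0 : ℝ) w)
    rwa [map_zero, add_zero] at h3
  set r := rot90 v
  set Ψ : ℝ → ℂ := fun t => u (z + t • v) + u (z + t • (-v)) + u (z + t • r) + u (z + t • (-r)) -
    4 * u z with hΨ
  set ψ : ℝ → ℂ := fun t => fderiv ℝ u (z + t • v) v + fderiv ℝ u (z + t • (-v)) (-v) +
    fderiv ℝ u (z + t • r) r + fderiv ℝ u (z + t • (-r)) (-r) with hψ
  have h1 : ∀ᶠ t in 𝓝 (0 : ℝ), HasDerivAt Ψ (ψ t) t := by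
    filter_upwards [hu1 v, hu1 (-v), hu1 r, hu1 (-r)] with t a1 a2 a3 a4
    exact (((a1.add a2).add a3).add a4).sub_const _
  have h2 : HasDerivAt ψ 0 0 := by
    have := (((hu2 v).add (hu2 (-v))).add (hu2 r)).add (hu2 (-r))
    have e : B v v + B (-v) (-v) + B r r + B (-r) (-r) = 0 := by
      simp only [map_neg, neg_apply, neg_neg]
      linear_combination 2 * hlapv
    rw [e] at this
    exact this
  have h3 : ψ =o[𝓝 0] fun t : ℝ => t := by
    have := hasDerivAt_iff_isLittleO.1 h2
    have e : ψ 0 = 0 := by simp [hψ]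
    simpa [e] using this
  have h4 := norm_le_mul_sq_of_hasDerivAt (Ψ := Ψ) (by simp [hΨ]; ring) h1 h3 hc
  filter_upwards [h4] with t ht
  simpa [hΨ, sub_eq_add_neg] using ht

lemma IsHarmonicOn.eventually_lap4_norm_sq_ge {u : ℝ × ℝ → ℂ} {S : Set (ℝ × ℝ)}
    (hu : IsHarmonicOn u S) (hS : IsOpen S) {W : ℝ × ℝ → ℝ} (hW : ∀ y ∈ S, W y = ‖u y‖ ^ 2)
    {z : ℝ × ℝ} (hz : z ∈ S) (v : ℝ × ℝ) {c : ℝ} (hc : 0 < c) :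
    ∀ᶠ t in 𝓝[>] (0 : ℝ), -(c * t ^ 2) ≤ lap4 W v z t := by
  have hmem : ∀ w : ℝ × ℝ, ∀ᶠ t in 𝓝[>] (0 : ℝ), z + t • w ∈ S := fun w => by
    have h1 : ContinuousAt (fun t : ℝ => z + t • w) 0 := by fun_prop
    exact nhdsWithin_le_nhds (h1.eventually_mem (hS.mem_nhds (by simpa using hz)))
  have hc' : 0 < c / (4 * (‖u z‖ + 1)) := by positivity
  filter_upwards [hu.eventually_norm_symm_diff_le hS hz v hc', hmem v, hmem (-v), hmem (rot90 v),
    hmem (-rot90 v)] with t ht m1 m2 m3 m4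
  rw [smul_neg, ← sub_eq_add_neg] at m2 m4
  simp only [lap4, hW _ m1, hW _ m2, hW _ m3, hW _ m4, hW _ hz]
  set a₁ := u (z + t • v)
  set a₂ := u (z - t • v)
  set a₃ := u (z + t • rot90 v)
  set a₄ := u (z - t • rot90 v)
  set b := u z
  set P := a₁ + a₂ + a₃ + a₄ - 4 * b with hP
  have hsq : ∀ a : ℂ, ‖b‖ ^ 2 + 2 * (b.re * (a - b).re + b.im * (a - b).im) ≤ ‖a‖ ^ 2 := by
    intro a
    simp only [Complex.sq_norm, Complex.normSq_apply, Complex.sub_re, Complex.sub_im]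
    nlinarith [sq_nonneg (a.re - b.re), sq_nonneg (a.im - b.im)]
  have h1 := hsq a₁
  have h2 := hsq a₂
  have h3 := hsq a₃
  have h4 := hsq a₄
  have hre : P.re = a₁.re + a₂.re + a₃.re + a₄.re - 4 * b.re := by simp [hP]
  have him : P.im = a₁.im + a₂.im + a₃.im + a₄.im - 4 * b.im := by simp [hP]
  have k1 : -(‖b‖ * ‖P‖) ≤ b.re * P.re := by
    refine neg_le_of_abs_le ?_
    rw [abs_mul]
    exact mul_le_mul (Complex.abs_re_le_norm _) (Complex.abs_re_le_norm _) (abs_nonneg _)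
      (norm_nonneg _)
  have k2 : -(‖b‖ * ‖P‖) ≤ b.im * P.im := by
    refine neg_le_of_abs_le ?_
    rw [abs_mul]
    exact mul_le_mul (Complex.abs_im_le_norm _) (Complex.abs_im_le_norm _) (abs_nonneg _)
      (norm_nonneg _)
  have k3 : ‖b‖ * ‖P‖ ≤ c * t ^ 2 / 4 := by
    calc ‖b‖ * ‖P‖ ≤ (‖b‖ + 1) * (c / (4 * (‖b‖ + 1)) * t ^ 2) :=
          mul_le_mul (by linarith) ht (norm_nonneg _) (by positivity)
      _ = c * t ^ 2 / 4 := by field_simp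
  rw [hre] at k1
  rw [him] at k2
  simp only [Complex.sub_re, Complex.sub_im] at h1 h2 h3 h4
  linarith

lemma exists_hasDerivAt_of_norm_sq_matching {f : ℝ → ℂ} {w : ℝ → ℝ} {a b da db ω : ℂ}
    (hf : ∀ᶠ t in 𝓝[≠] (0 : ℝ), DifferentiableAt ℝ f t)
    (hw : ∀ᶠ t in 𝓝[≠] (0 : ℝ), w t = ‖f t‖ ^ 2) (hw0 : w 0 = ‖a‖ ^ 2)
    (ha : Tendsto f (𝓝[>] 0) (𝓝 a)) (hb : Tendsto f (𝓝[<] 0) (𝓝 b))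
    (hda : Tendsto (deriv f) (𝓝[>] 0) (𝓝 da)) (hdb : Tendsto (deriv f) (𝓝[<] 0) (𝓝 db))
    (hω : ‖ω‖ = 1) (hab : a = ω * b) (hdab : da = ω * db) : ∃ d, HasDerivAt w d 0 := by
  have hgt : 𝓝[>] (0 : ℝ) ≤ 𝓝[≠] 0 := nhdsWithin_mono _ fun x hx => (ne_of_gt hx)
  have hlt : 𝓝[<] (0 : ℝ) ≤ 𝓝[≠] 0 := nhdsWithin_mono _ fun x hx => (ne_of_lt hx)
  have hloc : ∀ᶠ t in 𝓝[≠] (0 : ℝ), HasDerivAt w (2 * inner ℝ (f t) (deriv f t)) t := by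
    obtain ⟨V, hV, hVo⟩ := eventually_nhdsWithin_iff.1 hw |>.exists_mem
    obtain ⟨O, hOV, hO, h0O⟩ := mem_nhds_iff.1 hV
    filter_upwards [hf, self_mem_nhdsWithin, nhdsWithin_le_nhds (hO.mem_nhds h0O)] with t h1 h2 h3
    refine h1.hasDerivAt.norm_sq.congr_of_eventuallyEq ?_
    filter_upwards [hO.mem_nhds h3, isOpen_ne.mem_nhds h2] with y hy hy0
    exact hVo y (hOV hy) hy0
  have hinner : inner ℝ a da = inner ℝ b db := by
    have h1 : ω.re * ω.re + ω.im * ω.im = 1 := by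
      rw [← Complex.normSq_apply, ← Complex.sq_norm, hω, one_pow]
    rw [hab, hdab, Complex.inner, Complex.inner]
    simp only [map_mul, Complex.mul_re, Complex.mul_im, Complex.conj_re, Complex.conj_im]
    linear_combination (b.re * db.re + b.im * db.im) * h1
  have hnorm : ‖a‖ = ‖b‖ := by rw [hab, norm_mul, hω, one_mul]
  refine ⟨2 * inner ℝ a da, ?_⟩
  have hR : HasDerivWithinAt w (2 * inner ℝ a da) (Ici 0) 0 := by
    refine hasDerivWithinAt_Ici_of_tendsto_deriv
      (s := {t | 0 < t ∧ HasDerivAt w (2 * inner ℝ (f t) (deriv f t)) t})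
      (fun t ht => ht.2.differentiableAt.differentiableWithinAt) ?_
      (inter_mem self_mem_nhdsWithin (hgt hloc)) ?_
    · refine ContinuousWithinAt.mono (t := Ioi 0) ?_ (fun t ht => ht.1)
      show Tendsto w _ _
      rw [hw0]
      exact (ha.norm.pow 2).congr' ((hw.filter_mono hgt).mono fun t ht => ht.symm)
    · exact ((ha.inner hda).const_mul 2).congr' ((hloc.filter_mono hgt).mono fun t ht => ht.deriv.symm)
  have hL : HasDerivWithinAt w (2 * inner ℝ a da) (Iic 0) 0 := by
    refine hasDerivWithinAt_Iic_of_tendsto_deriv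
      (s := {t | t < 0 ∧ HasDerivAt w (2 * inner ℝ (f t) (deriv f t)) t})
      (fun t ht => ht.2.differentiableAt.differentiableWithinAt) ?_
      (inter_mem self_mem_nhdsWithin (hlt hloc)) ?_
    · refine ContinuousWithinAt.mono (t := Iio 0) ?_ (fun t ht => ht.1)
      show Tendsto w _ _
      rw [hw0, hnorm]
      exact (hb.norm.pow 2).congr' ((hw.filter_mono hlt).mono fun t ht => ht.symm)
    · rw [hinner]
      exact ((hb.inner hdb).const_mul 2).congr' ((hloc.filter_mono hlt).mono fun t ht => ht.deriv.symm)
  have := hR.union hL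
  rwa [Ici_union_Iic, hasDerivWithinAt_univ] at this

lemma eq_add_smul_of_mem_segment {a b z : ℝ × ℝ} (hz : z ∈ segment ℝ a b) (ha : z ≠ a)
    (hb : z ≠ b) : ∃ θ ∈ Ioo (0 : ℝ) 1, z = a + θ • (b - a) := by
  rw [segment_eq_image'] at hz
  obtain ⟨θ, hθ, rfl⟩ := hz
  refine ⟨θ, ⟨lt_of_le_of_ne hθ.1 ?_, lt_of_le_of_ne hθ.2 ?_⟩, rfl⟩
  · rintro rfl
    simp at ha
  · rintro rfl
    simp at hb

lemma exists_flat_neighborhood {n : ℕ} {s : Fin (n + 1) → ℝ × ℝ} {Gam : Set (ℝ × ℝ)}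
    (hGam : Gam = ⋃ k ∈ {k : Fin (n + 1) | k ≠ 0}, segment ℝ (s 0) (s k)) {k : Fin (n + 1)}
    {z : ℝ × ℝ} (hz : z ∈ segment ℝ (s 0) (s k) \ range s) :
    ∃ R > 0, ∀ x t : ℝ, |x| < R → |t| < R →
      (t = 0 → z + x • (s k - s 0) ∈ segment ℝ (s 0) (s k) \ range s) ∧
      (t ≠ 0 → z + x • (s k - s 0) + t • rot90 (s k - s 0) ∈ Gamᶜ) := by
  have hz0 : z ≠ s 0 := fun h => hz.2 ⟨0, h.symm⟩
  obtain ⟨θ, ⟨hθ0, hθ1⟩, hzθ⟩ :=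
    eq_add_smul_of_mem_segment hz.1 hz0 fun h => hz.2 ⟨k, h.symm⟩
  set τ := s k - s 0 with hτ
  have hτ0 : τ.1 ^ 2 + τ.2 ^ 2 ≠ 0 := by
    intro h
    have h1 : τ = 0 := by
      refine Prod.ext ?_ ?_ <;> simp only [Prod.fst_zero, Prod.snd_zero] <;>
        nlinarith [sq_nonneg τ.1, sq_nonneg τ.2]
    exact hz0 (by rw [hzθ, h1, smul_zero, add_zero])
  have hseg : ∀ j, ∀ᶠ p in 𝓝 z, p ∈ segment ℝ (s 0) (s j) →
      (p.1 - (s 0).1) * (-τ.2) + (p.2 - (s 0).2) * τ.1 = 0 := by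
    intro j
    by_cases hj : z ∈ segment ℝ (s 0) (s j)
    · refine Eventually.of_forall fun p hp => ?_
      obtain ⟨θ', ⟨hθ'0, -⟩, hzθ'⟩ :=
        eq_add_smul_of_mem_segment hj hz0 fun h => hz.2 ⟨j, h.symm⟩
      rw [segment_eq_image'] at hp
      obtain ⟨r, -, rfl⟩ := hp
      have e := hzθ.symm.trans hzθ'
      have e1 := congrArg Prod.fst e
      have e2 := congrArg Prod.snd e
      simp only [Prod.fst_add, Prod.snd_add, Prod.smul_fst, Prod.smul_snd, smul_eq_mul] at e1 e2 ⊢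
      have e3 : θ' * ((s j - s 0).1 * (-τ.2) + (s j - s 0).2 * τ.1) = 0 := by
        linear_combination τ.2 * e1 - τ.1 * e2
      have e4 := (mul_eq_zero.1 e3).resolve_left hθ'0.ne'
      linear_combination r * e4
    · have hcl : IsClosed (segment ℝ (s 0) (s j)) := by
        rw [segment_eq_image']
        exact (isCompact_Icc.image (by fun_prop)).isClosed
      filter_upwards [hcl.isOpen_compl.mem_nhds hj] with p hp hp'
      exact absurd hp' hp
  have hrange : ∀ᶠ p in 𝓝 z, p ∉ range s :=
    (finite_range s).isClosed.isOpen_compl.eventually_mem hz.2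
  have hall : ∀ᶠ p in 𝓝 z, p ∉ range s ∧ ∀ j, p ∈ segment ℝ (s 0) (s j) →
      (p.1 - (s 0).1) * (-τ.2) + (p.2 - (s 0).2) * τ.1 = 0 :=
    hrange.and (eventually_all.2 hseg)
  have htend : Tendsto (fun w : ℝ × ℝ => z + w.1 • τ + w.2 • rot90 τ) (𝓝 0) (𝓝 z) := by
    have : Continuous fun w : ℝ × ℝ => z + w.1 • τ + w.2 • rot90 τ := by fun_prop
    simpa using this.tendsto 0
  have hθx : ∀ᶠ w : ℝ × ℝ in 𝓝 0, 0 < θ + w.1 ∧ θ + w.1 < 1 :=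
    (ContinuousAt.eventually_lt (by fun_prop) (by fun_prop) (by simpa using hθ0)).and
      (ContinuousAt.eventually_lt (by fun_prop) (by fun_prop) (by simpa using hθ1))
  obtain ⟨R, hR, hR'⟩ := Metric.eventually_nhds_iff.1 ((htend.eventually hall).and hθx)
  refine ⟨R, hR, fun x t hx ht => ?_⟩
  obtain ⟨⟨h1, h2⟩, h3, h4⟩ := hR' (y := (x, t)) (by
    rw [dist_zero_right, Prod.norm_def]
    exact max_lt hx ht)
  simp only at h1 h2 h3 h4
  refine ⟨fun h0 => ⟨?_, ?_⟩, fun h0 hmem => ?_⟩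
  · rw [segment_eq_image']
    refine ⟨θ + x, ⟨h3.le, h4.le⟩, ?_⟩
    simp only
    rw [hzθ, add_smul, add_assoc]
  · simpa [h0] using h1
  · rw [hGam] at hmem
    simp only [mem_iUnion] at hmem
    obtain ⟨j, -, hj⟩ := hmem
    have h5 := h2 j hj
    have e1 := congrArg Prod.fst hzθ
    have e2 := congrArg Prod.snd hzθ
    simp only [Prod.fst_add, Prod.snd_add, Prod.smul_fst, Prod.smul_snd, smul_eq_mul, rot90]
      at h5 e1 e2
    have : t * (τ.1 ^ 2 + τ.2 ^ 2) = 0 := by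
      rw [e1, e2] at h5
      linear_combination h5
    exact (mul_ne_zero h0 hτ0) this

lemma eventually_add_smul_rot90_mem_compl {n : ℕ} {s : Fin (n + 1) → ℝ × ℝ} {Gam : Set (ℝ × ℝ)}
    (hGam : Gam = ⋃ k ∈ {k : Fin (n + 1) | k ≠ 0}, segment ℝ (s 0) (s k)) {k : Fin (n + 1)}
    {z : ℝ × ℝ} (hz : z ∈ segment ℝ (s 0) (s k) \ range s) :
    ∀ᶠ t in 𝓝[≠] (0 : ℝ), z + t • rot90 (s k - s 0) ∈ Gamᶜ := by
  obtain ⟨R, hR, h⟩ := exists_flat_neighborhood hGam hz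
  have ev : ∀ᶠ t in 𝓝 (0 : ℝ), |t| < R :=
    ContinuousAt.eventually_lt (by fun_prop) (by fun_prop) (by simpa using hR)
  filter_upwards [nhdsWithin_le_nhds ev, self_mem_nhdsWithin] with t h1 h2
  simpa using (h 0 t (by simpa using hR) h1).2 h2

lemma isClosed_star {n : ℕ} {s : Fin (n + 1) → ℝ × ℝ} {Gam : Set (ℝ × ℝ)}
    (hGam : Gam = ⋃ k ∈ {k : Fin (n + 1) | k ≠ 0}, segment ℝ (s 0) (s k)) : IsClosed Gam := by
  rw [hGam]
  refine (toFinite _).isClosed_biUnion fun k _ => ?_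
  rw [segment_eq_image']
  exact (isCompact_Icc.image (by fun_prop)).isClosed

lemma range_subset_star {n : ℕ} (hn : 1 ≤ n) {s : Fin (n + 1) → ℝ × ℝ} {Gam : Set (ℝ × ℝ)}
    (hGam : Gam = ⋃ k ∈ {k : Fin (n + 1) | k ≠ 0}, segment ℝ (s 0) (s k)) : range s ⊆ Gam := by
  rintro _ ⟨j, rfl⟩
  rw [hGam]
  simp only [mem_iUnion]
  by_cases hj : j = 0
  · refine ⟨⟨1, by omega⟩, fun h => absurd (congrArg Fin.val h) (by simp), ?_⟩
    rw [hj]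
    exact left_mem_segment ℝ _ _
  · exact ⟨j, hj, right_mem_segment ℝ _ _⟩

lemma exists_sq_norm_extension {n : ℕ} (hn : 1 ≤ n) {s : Fin (n + 1) → ℝ × ℝ} {Gam : Set (ℝ × ℝ)}
    (hGam : Gam = ⋃ k ∈ {k : Fin (n + 1) | k ≠ 0}, segment ℝ (s 0) (s k)) {u : ℝ × ℝ → ℂ}
    (hharm : IsHarmonicOn u Gamᶜ)
    (hmatch : ∀ k : Fin (n + 1), k ≠ 0 → ∀ z ∈ segment ℝ (s 0) (s k) \ range s,
      ∃ a b da db ω : ℂ, ‖ω‖ = 1 ∧ a = ω * b ∧ da = ω * db ∧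
        Tendsto (fun t : ℝ => u (z + t • rot90 (s k - s 0))) (𝓝[>] 0) (𝓝 a) ∧
        Tendsto (fun t : ℝ => u (z + t • rot90 (s k - s 0))) (𝓝[<] 0) (𝓝 b) ∧
        Tendsto (deriv fun t : ℝ => u (z + t • rot90 (s k - s 0))) (𝓝[>] 0) (𝓝 da) ∧
        Tendsto (deriv fun t : ℝ => u (z + t • rot90 (s k - s 0))) (𝓝[<] 0) (𝓝 db)) :
    ∃ W : ℝ × ℝ → ℝ, (∀ z ∈ Gamᶜ, W z = ‖u z‖ ^ 2) ∧ (∀ j, W (s j) = 0) ∧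
      ∀ k : Fin (n + 1), k ≠ 0 → ∀ z ∈ segment ℝ (s 0) (s k) \ range s,
        ∃ d, HasDerivAt (fun t : ℝ => W (z + t • rot90 (s k - s 0))) d 0 := by
  classical
  set W : ℝ × ℝ → ℝ := fun z => if z ∈ Gamᶜ then ‖u z‖ ^ 2 else if z ∈ range s then 0 else
    limUnder (𝓝[>] (0 : ℝ)) (fun t : ℝ => ‖u (z + t • rot90 (z - s 0))‖ ^ 2) with hW
  have hWc : ∀ z ∈ Gamᶜ, W z = ‖u z‖ ^ 2 := fun z hz => if_pos hz
  refine ⟨W, hWc, fun j => ?_, fun k hk z hz => ?_⟩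
  · have h1 : s j ∉ Gamᶜ := fun h => h (range_subset_star hn hGam ⟨j, rfl⟩)
    simp only [hW]
    rw [if_neg h1, if_pos ⟨j, rfl⟩]
  · obtain ⟨a, b, da, db, ω, hω, hab, hdab, ha, hb, hda, hdb⟩ := hmatch k hk z hz
    have hev := eventually_add_smul_rot90_mem_compl hGam hz
    refine exists_hasDerivAt_of_norm_sq_matching
      (f := fun t : ℝ => u (z + t • rot90 (s k - s 0))) ?_ (hev.mono fun t ht => hWc _ ht)
      ?_ ha hb hda hdb hω hab hdab
    · filter_upwards [hev] with t ht
      have h1 : DifferentiableAt ℝ u (z + t • rot90 (s k - s 0)) :=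
        (hharm.1.contDiffAt ((isClosed_star hGam).isOpen_compl.mem_nhds ht)).differentiableAt
          (by norm_num)
      exact DifferentiableAt.comp t h1 (by fun_prop)
    · have hz1 : z ∉ Gamᶜ := fun h => h (by
        rw [hGam]
        simp only [mem_iUnion]
        exact ⟨k, hk, hz.1⟩)
      simp only [zero_smul, add_zero, hW]
      rw [if_neg hz1, if_neg hz.2]
      obtain ⟨θ, ⟨hθ0, -⟩, hzθ⟩ := eq_add_smul_of_mem_segment hz.1 (fun h => hz.2 ⟨0, h.symm⟩)
        fun h => hz.2 ⟨k, h.symm⟩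
      have hscale : Tendsto (fun t : ℝ => t * θ) (𝓝[>] 0) (𝓝[>] 0) := by
        refine tendsto_nhdsWithin_iff.2 ⟨?_, ?_⟩
        · refine tendsto_nhdsWithin_of_tendsto_nhds ?_
          have : Continuous fun t : ℝ => t * θ := by fun_prop
          simpa using this.tendsto 0
        · filter_upwards [self_mem_nhdsWithin] with t ht
          exact mul_pos ht hθ0
      have hdir : ∀ t : ℝ, t • rot90 (z - s 0) = (t * θ) • rot90 (s k - s 0) := fun t => by
        have : z - s 0 = θ • (s k - s 0) := by rw [hzθ]; abel
        rw [this]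
        ext <;> simp [rot90] <;> ring
      have hlim := (ha.comp hscale).norm.pow 2
      refine Tendsto.limUnder_eq ?_
      refine hlim.congr fun t => ?_
      simp only [Function.comp_apply, hdir]

lemma le_of_eventually_le_compl {n : ℕ} {s : Fin (n + 1) → ℝ × ℝ} {Gam : Set (ℝ × ℝ)}
    (hGam : Gam = ⋃ k ∈ {k : Fin (n + 1) | k ≠ 0}, segment ℝ (s 0) (s k)) {W : ℝ × ℝ → ℝ}
    {k : Fin (n + 1)} {z : ℝ × ℝ} (hz : z ∈ segment ℝ (s 0) (s k) \ range s) {d c : ℝ}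
    (hd : HasDerivAt (fun t : ℝ => W (z + t • rot90 (s k - s 0))) d 0)
    (h : ∀ᶠ p in 𝓝 z, p ∈ Gamᶜ → W p ≤ c) : W z ≤ c := by
  have h1 : Tendsto (fun t : ℝ => W (z + t • rot90 (s k - s 0))) (𝓝[≠] 0) (𝓝 (W z)) := by
    simpa using hd.continuousAt.tendsto.mono_left nhdsWithin_le_nhds
  have h2 : Tendsto (fun t : ℝ => z + t • rot90 (s k - s 0)) (𝓝[≠] 0) (𝓝 z) := by
    have : Continuous fun t : ℝ => z + t • rot90 (s k - s 0) := by fun_prop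
    simpa using (this.tendsto 0).mono_left nhdsWithin_le_nhds
  refine le_of_tendsto h1 ?_
  filter_upwards [h2.eventually h, eventually_add_smul_rot90_mem_compl hGam hz] with t h3 h4
  exact h3 h4

lemma exists_mem_segment_of_notMem_range {n : ℕ} {s : Fin (n + 1) → ℝ × ℝ} {Gam : Set (ℝ × ℝ)}
    (hGam : Gam = ⋃ k ∈ {k : Fin (n + 1) | k ≠ 0}, segment ℝ (s 0) (s k)) {z : ℝ × ℝ}
    (hz : z ∉ Gamᶜ) (hs : z ∉ range s) : ∃ k ≠ 0, z ∈ segment ℝ (s 0) (s k) \ range s := by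
  rw [notMem_compl_iff, hGam] at hz
  simp only [mem_iUnion] at hz
  obtain ⟨k, hk, hzk⟩ := hz
  exact ⟨k, hk, hzk, hs⟩

lemma upperSemicontinuousAt_of_mem_segment {n : ℕ} {s : Fin (n + 1) → ℝ × ℝ} {Gam : Set (ℝ × ℝ)}
    (hGam : Gam = ⋃ k ∈ {k : Fin (n + 1) | k ≠ 0}, segment ℝ (s 0) (s k)) {u : ℝ × ℝ → ℂ}
    (hharm : IsHarmonicOn u Gamᶜ) {W : ℝ × ℝ → ℝ} (hW : ∀ z ∈ Gamᶜ, W z = ‖u z‖ ^ 2) {C : ℝ}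
    (hWC : ∀ z, 0 ≤ W z ∧ W z ≤ C) {k : Fin (n + 1)}
    (hD : ∀ z ∈ segment ℝ (s 0) (s k) \ range s,
      ∃ d, HasDerivAt (fun t : ℝ => W (z + t • rot90 (s k - s 0))) d 0)
    {z : ℝ × ℝ} (hz : z ∈ segment ℝ (s 0) (s k) \ range s) : UpperSemicontinuousAt W z := by
  have hO : IsOpen Gamᶜ := (isClosed_star hGam).isOpen_compl
  have hz0 : z ≠ s 0 := fun h => hz.2 ⟨0, h.symm⟩
  obtain ⟨R, hR, hflat⟩ := exists_flat_neighborhood hGam hz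
  obtain ⟨θ, -, hzθ⟩ := eq_add_smul_of_mem_segment hz.1 hz0 fun h => hz.2 ⟨k, h.symm⟩
  set τ := s k - s 0 with hτ
  have hτ0 : τ.1 ^ 2 + τ.2 ^ 2 ≠ 0 := by
    intro h
    have h1 : τ = 0 := by
      refine Prod.ext ?_ ?_ <;> simp only [Prod.fst_zero, Prod.snd_zero] <;>
        nlinarith [sq_nonneg τ.1, sq_nonneg τ.2]
    exact hz0 (by rw [hzθ, h1, smul_zero, add_zero])
  set P : ℝ × ℝ → ℝ × ℝ := fun w => z + w.1 • τ + w.2 • rot90 τ with hP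
  have hPc : Continuous P := by fun_prop
  have hlap : ∀ w t, lap4 (W ∘ P) (1, 0) w t = lap4 W τ (P w) t := by
    intro w t
    have h1 : P (w + t • (1, 0)) = P w + t • τ := by
      ext <;> simp [hP, rot90] <;> ring
    have h2 : P (w - t • (1, 0)) = P w - t • τ := by
      ext <;> simp [hP, rot90] <;> ring
    have h3 : P (w + t • rot90 (1, 0)) = P w + t • rot90 τ := by
      ext <;> simp [hP, rot90] <;> ring
    have h4 : P (w - t • rot90 (1, 0)) = P w - t • rot90 τ := by
      ext <;> simp [hP, rot90] <;> ring
    simp only [lap4, Function.comp_apply, h1, h2, h3, h4]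
  have hF : UpperSemicontinuousAt (W ∘ P) (0, 0) := by
    refine upperSemicontinuousAt_of_hasDerivAt_transverse (R := R) (C := C)
      (fun w _ _ => hWC _) (fun w h1 h2 h3 => ?_) (fun w h1 h2 h3 c hc => ?_) (fun x hx => ?_)
      (by simpa using hR)
    · have hm : P w ∈ Gamᶜ := (hflat w.1 w.2 h1 h2).2 h3
      refine ContinuousAt.comp ?_ hPc.continuousAt
      have h4 : W =ᶠ[𝓝 (P w)] fun y => ‖u y‖ ^ 2 := by
        filter_upwards [hO.mem_nhds hm] with y hy
        exact hW y hy
      refine ContinuousAt.congr ?_ h4.symm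
      exact ((hharm.1.continuousOn.continuousAt (hO.mem_nhds hm)).norm).pow 2
    · refine (hharm.eventually_lap4_norm_sq_ge hO hW ((hflat w.1 w.2 h1 h2).2 h3) τ hc).mono
        fun t ht => ?_
      exact ht.trans_eq (hlap w t).symm
    · exact hD _ ((hflat x 0 hx (by simpa using hR)).1 rfl)
  set Q : ℝ × ℝ → ℝ × ℝ := fun p =>
    (((p.1 - z.1) * τ.1 + (p.2 - z.2) * τ.2) / (τ.1 ^ 2 + τ.2 ^ 2),
      ((p.1 - z.1) * (-τ.2) + (p.2 - z.2) * τ.1) / (τ.1 ^ 2 + τ.2 ^ 2)) with hQ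
  have hQc : Continuous Q := by fun_prop
  have hPQ : ∀ p, P (Q p) = p := by
    intro p
    ext <;> simp only [hP, hQ, rot90, Prod.fst_add, Prod.snd_add, Prod.smul_fst, Prod.smul_snd,
      smul_eq_mul] <;> field_simp <;> ring
  have hQz : Q z = (0, 0) := by simp [hQ]
  intro y hy
  have hy' : (W ∘ P) (0, 0) < y := by simpa [hP] using hy
  have h1 := hF y hy'
  rw [← hQz] at h1
  filter_upwards [hQc.continuousAt.eventually h1] with p hp
  simpa [hPQ] using hp

lemma upperSemicontinuous_sq_norm_extension {n : ℕ} {s : Fin (n + 1) → ℝ × ℝ}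
    {Gam : Set (ℝ × ℝ)}
    (hGam : Gam = ⋃ k ∈ {k : Fin (n + 1) | k ≠ 0}, segment ℝ (s 0) (s k)) {u : ℝ × ℝ → ℂ}
    (hharm : IsHarmonicOn u Gamᶜ) {W : ℝ × ℝ → ℝ} (hW : ∀ z ∈ Gamᶜ, W z = ‖u z‖ ^ 2) {C : ℝ}
    (hWC : ∀ z, 0 ≤ W z ∧ W z ≤ C) (hWs : ∀ j, W (s j) = 0)
    (hvanish : ∀ k : Fin (n + 1), Tendsto u (𝓝[Gamᶜ] (s k)) (𝓝 0))
    (hD : ∀ k : Fin (n + 1), k ≠ 0 → ∀ z ∈ segment ℝ (s 0) (s k) \ range s,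
      ∃ d, HasDerivAt (fun t : ℝ => W (z + t • rot90 (s k - s 0))) d 0) :
    UpperSemicontinuous W := by
  have hO : IsOpen Gamᶜ := (isClosed_star hGam).isOpen_compl
  intro z
  by_cases hz : z ∈ Gamᶜ
  · have h4 : W =ᶠ[𝓝 z] fun y => ‖u y‖ ^ 2 := by
      filter_upwards [hO.mem_nhds hz] with y hy
      exact hW y hy
    refine ContinuousAt.upperSemicontinuousAt (ContinuousAt.congr ?_ h4.symm)
    exact ((hharm.1.continuousOn.continuousAt (hO.mem_nhds hz)).norm).pow 2
  by_cases hs : z ∈ range s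
  · obtain ⟨j, rfl⟩ := hs
    intro e he
    rw [hWs] at he
    have h1 : Tendsto (fun p => ‖u p‖ ^ 2) (𝓝[Gamᶜ] (s j)) (𝓝 0) := by
      simpa using (hvanish j).norm.pow 2
    have h2 : ∀ᶠ p in 𝓝 (s j), p ∈ Gamᶜ → W p ≤ e / 2 := by
      filter_upwards [eventually_nhdsWithin_iff.1 (h1.eventually_lt_const (half_pos he))] with p hp hm
      rw [hW p hm]
      exact (hp hm).le
    filter_upwards [eventually_eventually_nhds.2 h2] with p hp
    have h3 : W p ≤ e / 2 := by
      by_cases hpG : p ∈ Gamᶜ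
      · exact hp.self_of_nhds hpG
      by_cases hps : p ∈ range s
      · obtain ⟨i, rfl⟩ := hps
        rw [hWs]
        exact (half_pos he).le
      obtain ⟨k, hk, hpk⟩ := exists_mem_segment_of_notMem_range hGam hpG hps
      obtain ⟨d, hd⟩ := hD k hk p hpk
      exact le_of_eventually_le_compl hGam hpk hd hp
    linarith
  · obtain ⟨k, hk, hzk⟩ := exists_mem_segment_of_notMem_range hGam hz hs
    exact upperSemicontinuousAt_of_mem_segment hGam hharm hW hWC (hD k hk) hzk

lemma exists_convex_strict_across_star {n : ℕ} (s : Fin (n + 1) → ℝ × ℝ) :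
    ∃ g : ℝ × ℝ → ℝ, Continuous g ∧ (∀ z v, 0 ≤ g (z + v) + g (z - v) - 2 * g z) ∧
      ∀ k, ∀ z ∈ segment ℝ (s 0) (s k) \ range s, ∃ c > 0, ∀ t > 0,
        c * t ≤ g (z + t • rot90 (s k - s 0)) + g (z - t • rot90 (s k - s 0)) - 2 * g z := by
  set L : Fin (n + 1) → ℝ × ℝ → ℝ := fun k z =>
    (z.1 - (s 0).1) * (-(s k - s 0).2) + (z.2 - (s 0).2) * (s k - s 0).1 with hL
  have hterm : ∀ k z v, 0 ≤ |L k (z + v)| + |L k (z - v)| - 2 * |L k z| := by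
    intro k z v
    have h1 : 2 * L k z = L k (z + v) + L k (z - v) := by
      simp only [hL, Prod.fst_add, Prod.snd_add, Prod.fst_sub, Prod.snd_sub]
      ring
    have h2 := abs_add_le (L k (z + v)) (L k (z - v))
    rw [← h1, abs_mul, abs_two] at h2
    linarith
  have hsum : ∀ z v, (∑ k, |L k (z + v)|) + (∑ k, |L k (z - v)|) - 2 * ∑ k, |L k z| =
      ∑ k, (|L k (z + v)| + |L k (z - v)| - 2 * |L k z|) := by
    intro z v
    rw [Finset.sum_sub_distrib, Finset.sum_add_distrib, Finset.mul_sum]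
  refine ⟨fun z => ∑ k, |L k z|, ?_, fun z v => ?_, fun k z hz => ?_⟩
  · simp only [hL]
    fun_prop
  · rw [hsum]
    exact Finset.sum_nonneg fun k _ => hterm k z v
  · have hz0 : z ≠ s 0 := fun h => hz.2 ⟨0, h.symm⟩
    obtain ⟨θ, -, hzθ⟩ := eq_add_smul_of_mem_segment hz.1 hz0 fun h => hz.2 ⟨k, h.symm⟩
    have hτ : 0 < sqDist (s 0) (s k) := by
      refine sqDist_pos fun h => hz0 ?_
      rw [hzθ, h, sub_self, smul_zero, add_zero]
    refine ⟨2 * sqDist (s 0) (s k), by positivity, fun t ht => ?_⟩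
    rw [hsum]
    refine le_trans (le_of_eq ?_) (Finset.single_le_sum (fun j _ => hterm j z _) (Finset.mem_univ k))
    have e1 := congrArg Prod.fst hzθ
    have e2 := congrArg Prod.snd hzθ
    simp only [Prod.fst_add, Prod.snd_add, Prod.smul_fst, Prod.smul_snd, smul_eq_mul, Prod.fst_sub,
      Prod.snd_sub] at e1 e2
    have h0 : L k z = 0 := by
      simp only [hL, Prod.fst_sub, Prod.snd_sub]
      rw [e1, e2]
      ring
    have hp : L k (z + t • rot90 (s k - s 0)) = t * sqDist (s 0) (s k) := by
      rw [← add_zero (t * _), ← h0]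
      simp only [hL, sqDist, rot90, Prod.fst_add, Prod.snd_add, Prod.smul_fst, Prod.smul_snd,
        smul_eq_mul, Prod.fst_sub, Prod.snd_sub]
      ring
    have hm : L k (z - t • rot90 (s k - s 0)) = -(t * sqDist (s 0) (s k)) := by
      rw [← add_zero (-_), ← h0]
      simp only [hL, sqDist, rot90, Prod.smul_fst, Prod.smul_snd,
        smul_eq_mul, Prod.fst_sub, Prod.snd_sub]
      ring
    rw [hp, hm, h0, abs_neg, abs_of_pos (mul_pos ht hτ), abs_zero]
    ring

lemma exists_sqDist_lt_of_mem_nhds {a : ℝ × ℝ} {p : ℝ × ℝ → Prop} (h : ∀ᶠ z in 𝓝 a, p z) :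
    ∃ ρ > 0, ∀ z, sqDist a z ≤ ρ → p z := by
  obtain ⟨r, hr, h'⟩ := Metric.eventually_nhds_iff.1 h
  refine ⟨r ^ 2 / 2, by positivity, fun z hz => h' ?_⟩
  rw [Prod.dist_eq, Real.dist_eq, Real.dist_eq]
  unfold sqDist at hz
  have hr2 : 0 < r ^ 2 := by positivity
  refine max_lt (abs_lt_of_sq_lt_sq ?_ hr.le) (abs_lt_of_sq_lt_sq ?_ hr.le) <;>
    nlinarith [sq_nonneg (z.1 - a.1), sq_nonneg (z.2 - a.2)]

lemma isCompact_annulus (a : ℝ × ℝ) (ρ R : ℝ) : IsCompact {z | ρ ≤ sqDist a z ∧ sqDist a z ≤ R} := by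
  refine Metric.isCompact_of_isClosed_isBounded ?_ ?_
  · exact (isClosed_le continuous_const (continuous_sqDist a)).inter
      (isClosed_le (continuous_sqDist a) continuous_const)
  · refine (Metric.isBounded_closedBall (x := a) (r := |R| + 1)).subset fun z hz => ?_
    have h2 := hz.2
    unfold sqDist at h2
    have hR := le_abs_self R
    have hR0 := abs_nonneg R
    rw [Metric.mem_closedBall, Prod.dist_eq, Real.dist_eq, Real.dist_eq]
    refine max_le (abs_le_of_sq_le_sq ?_ (by positivity)) (abs_le_of_sq_le_sq ?_ (by positivity)) <;>
      nlinarith [sq_nonneg (z.1 - a.1), sq_nonneg (z.2 - a.2)]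

lemma le_zero_of_bounded_subharmonic_off_star {n : ℕ} {s : Fin (n + 1) → ℝ × ℝ}
    {Gam : Set (ℝ × ℝ)}
    (hGam : Gam = ⋃ k ∈ {k : Fin (n + 1) | k ≠ 0}, segment ℝ (s 0) (s k)) {W : ℝ × ℝ → ℝ} {C : ℝ}
    (hWC : ∀ z, W z ≤ C) (hWs : ∀ j, W (s j) = 0) (hWu : UpperSemicontinuous W)
    (hWL : ∀ z ∈ Gamᶜ, ∀ c > 0, ∀ᶠ t in 𝓝[>] (0 : ℝ), -(c * t ^ 2) ≤ lap4 W (1, 0) z t)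
    (hD : ∀ k : Fin (n + 1), k ≠ 0 → ∀ z ∈ segment ℝ (s 0) (s k) \ range s,
      ∃ d, HasDerivAt (fun t : ℝ => W (z + t • rot90 (s k - s 0))) d 0) (x : ℝ × ℝ) :
    W x ≤ 0 := by
  by_cases hx : x = s 0
  · rw [hx, hWs]
  have hxpos := sqDist_pos hx
  obtain ⟨g, hg, hgc, hgs⟩ := exists_convex_strict_across_star s
  refine le_of_forall_pos_le_add fun e he => ?_
  rw [zero_add]
  obtain ⟨ρ, hρ, hWρ⟩ := exists_sqDist_lt_of_mem_nhds (hWu (s 0) e ((hWs 0).trans_lt he))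
  rcases le_or_gt (sqDist (s 0) x) ρ with hxρ | hxρ
  · exact (hWρ x hxρ).le
  refine le_of_forall_pos_le_add_mul (l := Real.log (sqDist (s 0) x) - Real.log ρ) fun η hη => ?_
  obtain ⟨R, hRC, hRx⟩ := ((Real.tendsto_log_atTop.eventually_ge_atTop
    (|C| / η + Real.log ρ)).and (eventually_ge_atTop (sqDist (s 0) x))).exists
  have hbar : C ≤ η * (Real.log R - Real.log ρ) := by
    have h1 : |C| / η ≤ Real.log R - Real.log ρ := by linarith
    rw [div_le_iff₀' hη] at h1
    exact (le_abs_self C).trans h1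
  have hpos : ∀ z ∈ {z | ρ ≤ sqDist (s 0) z ∧ sqDist (s 0) z ≤ R}, 0 < sqDist (s 0) z :=
    fun z hz => hρ.trans_le hz.1
  have hh0 : ∀ z, ρ ≤ sqDist (s 0) z →
      0 ≤ η * (Real.log (sqDist (s 0) z) - Real.log ρ) := fun z hz =>
    mul_nonneg hη.le (sub_nonneg.2 (Real.log_le_log hρ hz))
  have hdiff : ∀ z, 0 < sqDist (s 0) z →
      DifferentiableAt ℝ (fun z => e + η * (Real.log (sqDist (s 0) z) - Real.log ρ)) z :=
    fun z hz => (((differentiableAt_log_sqDist hz).sub_const _).const_mul η).const_add e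
  refine le_of_maximum_principle (isCompact_annulus (s 0) ρ R)
    (U := {z | ρ < sqDist (s 0) z ∧ sqDist (s 0) z < R} ∩ (range s)ᶜ) (g := g)
    (h := fun z => e + η * (Real.log (sqDist (s 0) z) - Real.log ρ)) ?_ ?_
    (hWu.upperSemicontinuousOn _)
    (fun z hz => (hdiff z (hpos z hz)).continuousAt.continuousWithinAt) hg hgc ?_ ?_ ?_ ?_ x
    ⟨hxρ.le, hRx⟩
  · exact ((isOpen_lt continuous_const (continuous_sqDist _)).inter
      (isOpen_lt (continuous_sqDist _) continuous_const)).inter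
      (finite_range s).isClosed.isOpen_compl
  · exact fun z hz => ⟨hz.1.1.le, hz.1.2.le⟩
  · intro z hz hzU
    have h0 := hh0 z hz.1
    by_cases hs : z ∈ range s
    · obtain ⟨j, rfl⟩ := hs
      rw [hWs]
      linarith
    rcases hz.1.eq_or_lt with h1 | h1
    · linarith [hWρ z h1.ge]
    rcases hz.2.eq_or_lt with h2 | h2
    · rw [h2]
      linarith [hWC z]
    · exact absurd ⟨⟨h1, h2⟩, hs⟩ hzU
  · exact fun z hz => hdiff z (hρ.trans hz.1.1)
  · intro z hz c hc
    filter_upwards [eventually_abs_lap4_log_sqDist_le (hρ.trans hz.1.1) (div_pos hc hη)] with t ht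
    have h1 := (abs_le.1 ht).2
    have h2 : lap4 (fun z => e + η * (Real.log (sqDist (s 0) z) - Real.log ρ)) (1, 0) z t =
        η * lap4 (fun y => Real.log (sqDist (s 0) y)) (1, 0) z t := by
      simp only [lap4]
      ring
    rw [h2]
    calc _ ≤ η * (c / η * t ^ 2) := mul_le_mul_of_nonneg_left h1 hη.le
      _ = c * t ^ 2 := by field_simp
  · intro z hz
    by_cases hzG : z ∈ Gamᶜ
    · exact Or.inl (hWL z hzG)
    obtain ⟨k, hk, hzk⟩ := exists_mem_segment_of_notMem_range hGam hzG hz.2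
    obtain ⟨d, hd⟩ := hD k hk z hzk
    obtain ⟨c, hc, hgz⟩ := hgs k z hzk
    exact Or.inr ⟨_, c, d, hc, hd, hgz⟩

theorem no_bounded_harmonic_with_matching
    (n : ℕ) (hn : 1 ≤ n) (s : Fin (n + 1) → ℝ × ℝ)
    (Gam : Set (ℝ × ℝ)) (hGam : Gam = ⋃ k ∈ {k : Fin (n + 1) | k ≠ 0}, segment ℝ (s 0) (s k))
    (u : ℝ × ℝ → ℂ)
    (hharm : IsHarmonicOn u Gamᶜ)
    (hbdd : ∃ B, ∀ x ∈ Gamᶜ, ‖u x‖ ≤ B)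
    -- vanishing at the endpoints s_k
    (hvanish : ∀ k : Fin (n + 1), Tendsto u (nhdsWithin (s k) Gamᶜ) (nhds 0))
    -- matching conditions across each segment, with flux constants α̃
    (α : ℝ × ℝ → ℝ)
    (hmatch : ∀ k : Fin (n + 1), k ≠ 0 → ∀ z ∈ segment ℝ (s 0) (s k) \ Set.range s,
      (∃ a b : ℂ,
        Tendsto (fun t : ℝ => u (z + t • rot90 (s k - s 0))) (nhdsWithin 0 (Set.Ioi 0)) (nhds a) ∧
        Tendsto (fun t : ℝ => u (z + t • rot90 (s k - s 0))) (nhdsWithin 0 (Set.Iio 0)) (nhds b) ∧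
        a = Complex.exp (-2 * π * Complex.I * (α z : ℂ)) * b) ∧
      (∃ da db : ℂ,
        Tendsto (fun t : ℝ => deriv (fun t' : ℝ => u (z + t' • rot90 (s k - s 0))) t)
          (nhdsWithin 0 (Set.Ioi 0)) (nhds da) ∧
        Tendsto (fun t : ℝ => deriv (fun t' : ℝ => u (z + t' • rot90 (s k - s 0))) t)
          (nhdsWithin 0 (Set.Iio 0)) (nhds db) ∧
        da = Complex.exp (-2 * π * Complex.I * (α z : ℂ)) * db)) :
    ∀ x ∈ Gamᶜ, u x = 0 := by
  obtain ⟨B, hB⟩ := hbdd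
  obtain ⟨W, hW, hWs, hD⟩ := exists_sq_norm_extension hn hGam hharm (fun k hk z hz => by
    obtain ⟨⟨a, b, ha, hb, hab⟩, da, db, hda, hdb, hdab⟩ := hmatch k hk z hz
    refine ⟨a, b, da, db, _, ?_, hab, hdab, ha, hb, hda, hdb⟩
    rw [Complex.norm_exp]
    simp)
  have hO : IsOpen Gamᶜ := (isClosed_star hGam).isOpen_compl
  have hbound : ∀ z, 0 ≤ W z ∧ W z ≤ B ^ 2 := by
    intro z
    by_cases hz : z ∈ Gamᶜ
    · rw [hW z hz]
      exact ⟨by positivity, pow_le_pow_left₀ (norm_nonneg _) (hB z hz) 2⟩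
    by_cases hs : z ∈ range s
    · obtain ⟨j, rfl⟩ := hs
      rw [hWs]
      exact ⟨le_rfl, sq_nonneg B⟩
    obtain ⟨k, hk, hzk⟩ := exists_mem_segment_of_notMem_range hGam hz hs
    obtain ⟨d, hd⟩ := hD k hk z hzk
    refine ⟨neg_nonpos.1 ?_, le_of_eventually_le_compl hGam hzk hd ?_⟩
    · refine le_of_eventually_le_compl (W := fun y => -W y) hGam hzk hd.neg ?_
      refine Eventually.of_forall fun p hp => ?_
      rw [hW p hp]
      exact neg_nonpos.2 (by positivity)
    · refine Eventually.of_forall fun p hp => ?_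
      rw [hW p hp]
      exact pow_le_pow_left₀ (norm_nonneg _) (hB p hp) 2
  have husc := upperSemicontinuous_sq_norm_extension hGam hharm hW hbound hWs hvanish hD
  intro x hx
  have hle := le_zero_of_bounded_subharmonic_off_star hGam (fun z => (hbound z).2) hWs husc
    (fun z hz c hc => hharm.eventually_lap4_norm_sq_ge hO hW hz _ hc) hD x
  rw [hW x hx] at hle
  exact norm_eq_zero.1 (pow_eq_zero_iff two_ne_zero |>.1 (le_antisymm hle (by positivity)))
end
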